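/- arXiv:2501.19193 — 5 statements merged into one kernel-verified Lean document; each statement's English description precedes it below -/
import Mathlib

section
/- Let a, b, c ∈ ℤ with Δ := √(b² − 4ac) a positive integer, let x₀, y₀ ∈ ℝ and n ∈ ℝ, n ≠ 0, and let h be the hyperbola {(x,y) : a(x−x₀)² + b(x−x₀)(y−y₀) + c(y−y₀)² = n}. Then there exists an invertible affine transformation of ℝ² sending h to the hyperbola {(x,y) : xy = |n|/Δ²} and sending ℤ² to p + Λ, where p ∈ ℝ² and Λ is a superlattice of ℤ² with det Λ = 1/Δ. Moreover, if gcd(a,b,c) = 1 then (1,0) and (0,1) are primitive vectors of Λ. -/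
/-!
Changing the sign of the equation if necessary, we may assume `n = |n|`. As `b² - 4ac = Δ²` is a
perfect square, the form splits over `ℤ` as `(αx + βy)(γx + δy)` with `αδ - βγ = Δ`. The affine map
`(x, y) ↦ (αX + βY, γX + δY) / Δ`, where `X = x - x₀` and `Y = y - y₀`, then sends the hyperbola to
`xy = |n| / Δ²`, and `ℤ²` to a translate of the lattice `Λ` spanned by `v = (α, γ) / Δ` and
`w = (β, δ) / Δ`. By Cramer's rule `(1, 0) = δ v - γ w` and `(0, 1) = -β v + α w`, so `ℤ² ⊆ Λ`. A
vector is primitive when its coordinates in a basis of the lattice are coprime, and both `gcd(α, β)`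
and `gcd(γ, δ)` divide `gcd(a, b, c)`.
-/

noncomputable section

/-- The integer lattice `ℤ² ⊂ ℝ²`. -/
def intLattice : Set (ℝ × ℝ) := {q | ∃ a b : ℤ, q = ((a : ℝ), (b : ℝ))}

/-- The hyperbola `a(x-x₀)² + b(x-x₀)(y-y₀) + c(y-y₀)² = n`. -/
def hypSet (a b c : ℤ) (x₀ y₀ n : ℝ) : Set (ℝ × ℝ) :=
  {q | (a : ℝ) * (q.1 - x₀) ^ 2 + (b : ℝ) * (q.1 - x₀) * (q.2 - y₀)
      + (c : ℝ) * (q.2 - y₀) ^ 2 = n}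

/-- The lattice generated by two vectors `v, w`. -/
def latticeOf (v w : ℝ × ℝ) : Set (ℝ × ℝ) :=
  {q | ∃ a b : ℤ, q = (a : ℝ) • v + (b : ℝ) • w}

/-- The covolume (absolute determinant) of the lattice with basis `v, w`. -/
def detOf (v w : ℝ × ℝ) : ℝ := |v.1 * w.2 - v.2 * w.1|

/-- The translate `p + S` of a set `S ⊆ ℝ²`. -/
def translateSet (p : ℝ × ℝ) (S : Set (ℝ × ℝ)) : Set (ℝ × ℝ) := (fun q => p + q) '' S

/-- `u` is a primitive vector of the lattice `Λ`: `u ∈ Λ` and `u` is not a multiple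
`k • w`, `k ≥ 2`, of any `w ∈ Λ`. -/
def IsPrimitiveVec (Λ : Set (ℝ × ℝ)) (u : ℝ × ℝ) : Prop :=
  u ∈ Λ ∧ ∀ w ∈ Λ, ∀ k : ℤ, 2 ≤ k → u ≠ (k : ℝ) • w

section Factorization

lemma exists_mul_refinement_of_mul_eq_mul {M : Type*} [CommMonoidWithZero M] [IsCancelMulZero M]
    [DecompositionMonoid M] {a c m k : M} (h : m * k = a * c) :
    ∃ α β γ δ : M, a = α * γ ∧ m = α * δ ∧ k = β * γ ∧ c = β * δ := by
  rcases eq_or_ne a 0 with rfl | ha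
  · rcases mul_eq_zero.1 (h.trans (zero_mul c)) with rfl | rfl
    · exact ⟨0, 1, k, c, by simp⟩
    · exact ⟨m, c, 0, 1, by simp⟩
  · obtain ⟨α, γ, ⟨δ, rfl⟩, ⟨β, rfl⟩, rfl⟩ := exists_dvd_and_dvd_of_dvd_mul (Dvd.intro c h.symm)
    refine ⟨α, β, γ, δ, rfl, rfl, mul_comm γ β, mul_left_cancel₀ ha ?_⟩
    rw [← h, mul_mul_mul_comm, mul_comm δ β]

variable {R : Type*} [CommRing R] [IsDomain R]

lemma exists_linear_factors_of_discrim_eq_sq [DecompositionMonoid R] (two_prime : Prime (2 : R))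
    {a b c D : R} (h : discrim a b c = D ^ 2) :
    ∃ α β γ δ : R, a = α * γ ∧ b = α * δ + β * γ ∧ c = β * δ ∧ α * δ - β * γ = D := by
  rw [discrim] at h
  have two_dvd : (2 : R) ∣ b - D := by
    rcases two_prime.dvd_or_dvd (a := b - D) (b := b + D)
      ⟨2 * a * c, by linear_combination h⟩ with hsub | hadd
    · exact hsub
    · convert dvd_sub hadd (dvd_mul_right 2 D) using 1
      ring
  obtain ⟨k, hk⟩ := two_dvd
  obtain rfl : b = 2 * k + D := sub_eq_iff_eq_add.1 hk
  -- `k + D` and `k` are to become the summands `α * δ` and `β * γ` of the middle coefficient.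
  have summands_mul : (k + D) * k = a * c := by
    refine mul_left_cancel₀ two_prime.ne_zero (mul_left_cancel₀ two_prime.ne_zero ?_)
    linear_combination h
  obtain ⟨α, β, γ, δ, ha, hm, hk', hc⟩ := exists_mul_refinement_of_mul_eq_mul summands_mul
  exact ⟨α, β, γ, δ, ha, by linear_combination hm + hk', hc, by linear_combination hk' - hm⟩

lemma isCoprime_of_isUnit_gcd_coeffs_mul [IsBezout R] [GCDMonoid R] {α β γ δ : R}
    (h : IsUnit (gcd (α * γ) (gcd (α * δ + β * γ) (β * δ)))) :
    IsCoprime α β ∧ IsCoprime γ δ := by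
  constructor
  · have hα := gcd_dvd_left α β
    have hβ := gcd_dvd_right α β
    exact (gcd_isUnit_iff _ _).1 <| isUnit_of_dvd_unit (dvd_gcd (hα.mul_right γ)
      (dvd_gcd (dvd_add (hα.mul_right δ) (hβ.mul_right γ)) (hβ.mul_right δ))) h
  · have hγ := gcd_dvd_left γ δ
    have hδ := gcd_dvd_right γ δ
    exact (gcd_isUnit_iff _ _).1 <| isUnit_of_dvd_unit (dvd_gcd (hγ.mul_left α)
      (dvd_gcd (dvd_add (hδ.mul_left α) (hγ.mul_left β)) (hδ.mul_left β))) h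

end Factorization

section PlaneDet

variable {R : Type*} [CommRing R]

/-- The determinant of a pair of vectors in the plane, whose absolute value over `ℝ` is `detOf`. -/
def planeDet (v w : R × R) : R := v.1 * w.2 - v.2 * w.1

lemma planeDet_smul_add_smul_left (s t : R) (v w : R × R) :
    planeDet (s • v + t • w) w = s * planeDet v w := by
  simp only [planeDet, Prod.fst_add, Prod.snd_add, Prod.smul_fst, Prod.smul_snd, smul_eq_mul]
  ring

lemma planeDet_smul_add_smul_right (s t : R) (v w : R × R) :
    planeDet v (s • v + t • w) = t * planeDet v w := by
  simp only [planeDet, Prod.fst_add, Prod.snd_add, Prod.smul_fst, Prod.smul_snd, smul_eq_mul]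
  ring

lemma planeDet_smul_add_planeDet_smul (q v w : R × R) :
    planeDet q w • v + planeDet v q • w = planeDet v w • q := by
  ext <;> simp only [planeDet, Prod.fst_add, Prod.snd_add, Prod.smul_fst, Prod.smul_snd,
    smul_eq_mul] <;> ring

end PlaneDet

section Plane

variable {K : Type*} [Field K]

/-- The linear automorphism `(s, t) ↦ s v + t w` of the plane attached to a basis `v, w`; its
inverse is given by Cramer's rule. -/
def planeLinearEquiv (v w : K × K) (hvw : planeDet v w ≠ 0) : (K × K) ≃ₗ[K] K × K where
  toLinearMap := (LinearMap.toSpanSingleton K _ v).coprod (LinearMap.toSpanSingleton K _ w)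
  invFun q := (planeDet q w / planeDet v w, planeDet v q / planeDet v w)
  left_inv q := Prod.ext
    ((div_eq_iff hvw).2 (planeDet_smul_add_smul_left q.1 q.2 v w))
    ((div_eq_iff hvw).2 (planeDet_smul_add_smul_right q.1 q.2 v w))
  right_inv q := by
    change (planeDet q w / planeDet v w) • v + (planeDet v q / planeDet v w) • w = q
    rw [div_eq_inv_mul, div_eq_inv_mul, mul_smul, mul_smul, ← smul_add,
      planeDet_smul_add_planeDet_smul, inv_smul_smul₀ hvw]

lemma planeLinearEquiv_apply {v w : K × K} (hvw : planeDet v w ≠ 0) (q : K × K) :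
    planeLinearEquiv v w hvw q = q.1 • v + q.2 • w := rfl

/-- The affine automorphism of the plane which sends `p` to the origin and whose linear part is
`(s, t) ↦ s v + t w`. -/
def planeAffineEquiv (p v w : K × K) (hvw : planeDet v w ≠ 0) : (K × K) ≃ᵃ[K] K × K :=
  (AffineEquiv.vaddConst K p).symm.trans (planeLinearEquiv v w hvw).toAffineEquiv

lemma planeAffineEquiv_apply (p : K × K) {v w : K × K} (hvw : planeDet v w ≠ 0) (q : K × K) :
    planeAffineEquiv p v w hvw q = (q.1 - p.1) • v + (q.2 - p.2) • w := rfl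

variable {α β γ δ D : K}

lemma planeDet_div (hD : D ≠ 0) (hdet : α * δ - β * γ = D) :
    planeDet (α / D, γ / D) (β / D, δ / D) = 1 / D := by
  rw [planeDet]
  field_simp
  linear_combination hdet

lemma one_zero_eq_smul_add_smul (hD : D ≠ 0) (hdet : α * δ - β * γ = D) :
    ((1, 0) : K × K) = δ • (α / D, γ / D) + (-γ) • (β / D, δ / D) := by
  simp only [Prod.smul_mk, Prod.mk_add_mk, smul_eq_mul, Prod.mk.injEq]
  constructor <;> field_simp
  · linear_combination -hdet
  · ring

lemma zero_one_eq_smul_add_smul (hD : D ≠ 0) (hdet : α * δ - β * γ = D) :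
    ((0, 1) : K × K) = (-β) • (α / D, γ / D) + α • (β / D, δ / D) := by
  simp only [Prod.smul_mk, Prod.mk_add_mk, smul_eq_mul, Prod.mk.injEq]
  constructor <;> field_simp
  · ring
  · linear_combination -hdet

end Plane

section Lattice

variable {v w : ℝ × ℝ}

lemma image_planeLinearEquiv_intLattice (hvw : planeDet v w ≠ 0) :
    planeLinearEquiv v w hvw '' intLattice = latticeOf v w := by
  ext q
  constructor
  · rintro ⟨_, ⟨s, t, rfl⟩, rfl⟩
    exact ⟨s, t, rfl⟩
  · rintro ⟨s, t, rfl⟩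
    exact ⟨_, ⟨s, t, rfl⟩, rfl⟩

lemma image_planeAffineEquiv_intLattice (p : ℝ × ℝ) (hvw : planeDet v w ≠ 0) :
    planeAffineEquiv p v w hvw '' intLattice =
      translateSet (-planeLinearEquiv v w hvw p) (latticeOf v w) := by
  rw [← image_planeLinearEquiv_intLattice hvw, translateSet, Set.image_image]
  refine Set.image_congr fun q _ => ?_
  rw [neg_add_eq_sub, ← map_sub]
  rfl

lemma intLattice_subset_latticeOf (h₁ : (1, 0) ∈ latticeOf v w) (h₂ : (0, 1) ∈ latticeOf v w) :
    intLattice ⊆ latticeOf v w := by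
  obtain ⟨i, j, hij⟩ := h₁
  obtain ⟨k, l, hkl⟩ := h₂
  rintro _ ⟨s, t, rfl⟩
  refine ⟨s * i + t * k, s * j + t * l, ?_⟩
  calc ((s : ℝ), (t : ℝ)) = (s : ℝ) • ((1, 0) : ℝ × ℝ) + (t : ℝ) • ((0, 1) : ℝ × ℝ) := by simp
    _ = ((s * i + t * k : ℤ) : ℝ) • v + ((s * j + t * l : ℤ) : ℝ) • w := by
      rw [hij, hkl]
      push_cast
      module

lemma isPrimitiveVec_of_isCoprime (hvw : planeDet v w ≠ 0) {s t : ℤ} (hst : IsCoprime s t) :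
    IsPrimitiveVec (latticeOf v w) ((s : ℝ) • v + (t : ℝ) • w) := by
  refine ⟨⟨s, t, rfl⟩, ?_⟩
  rintro _ ⟨i, j, rfl⟩ k hk heq
  have coords_eq : ((s : ℝ), (t : ℝ)) = ((k * i : ℝ), (k * j : ℝ)) := by
    apply (planeLinearEquiv v w hvw).injective
    simpa only [planeLinearEquiv_apply, mul_smul, smul_add] using heq
  obtain ⟨hs, ht⟩ := Prod.mk.inj coords_eq
  have k_isUnit : IsUnit k :=
    hst.isUnit_of_dvd' ⟨i, by exact_mod_cast hs⟩ ⟨j, by exact_mod_cast ht⟩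
  have := Int.isUnit_iff.1 k_isUnit
  omega

end Lattice

section Hyperbola

lemma discrim_eq_sq_of_eq_sqrt {a b c Δ : ℤ} (hΔ : 0 < Δ)
    (h : (Δ : ℝ) = √((b : ℝ) ^ 2 - 4 * a * c)) : discrim a b c = Δ ^ 2 := by
  have hsq := (Real.sqrt_eq_iff_mul_self_eq_of_pos (Int.cast_pos.2 hΔ)).1 h.symm
  rw [discrim, sq Δ]
  exact_mod_cast hsq.symm

lemma exists_hypSet_abs_eq (a b c : ℤ) (x₀ y₀ n : ℝ) :
    ∃ a' b' c' : ℤ, hypSet a' b' c' x₀ y₀ |n| = hypSet a b c x₀ y₀ n ∧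
      discrim a' b' c' = discrim a b c ∧
      Int.gcd a' (Int.gcd b' c') = Int.gcd a (Int.gcd b c) := by
  rcases abs_choice n with h | h
  · exact ⟨a, b, c, by rw [h], rfl, rfl⟩
  · refine ⟨-a, -b, -c, ?_, discrim_neg a b c, by simp only [Int.neg_gcd, Int.gcd_neg]⟩
    ext q
    simp only [h, hypSet, Set.mem_ofPred_eq, Int.cast_neg]
    rw [← neg_inj]
    ring_nf

lemma image_planeAffineEquiv_hypSet {v w : ℝ × ℝ} (hvw : planeDet v w ≠ 0) {a b c : ℤ} {t : ℝ}
    (ht : t ≠ 0) (ha : v.1 * v.2 = t * a) (hb : v.1 * w.2 + w.1 * v.2 = t * b)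
    (hc : w.1 * w.2 = t * c) (x₀ y₀ n : ℝ) :
    planeAffineEquiv (x₀, y₀) v w hvw '' hypSet a b c x₀ y₀ n = {q | q.1 * q.2 = t * n} := by
  set f := planeAffineEquiv (x₀, y₀) v w hvw
  have pullback_form (q : ℝ × ℝ) : (f q).1 * (f q).2 =
      t * (a * (q.1 - x₀) ^ 2 + b * (q.1 - x₀) * (q.2 - y₀) + c * (q.2 - y₀) ^ 2) := by
    simp only [f, planeAffineEquiv_apply, Prod.fst_add, Prod.snd_add, Prod.smul_fst,
      Prod.smul_snd, smul_eq_mul]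
    linear_combination (q.1 - x₀) ^ 2 * ha + (q.1 - x₀) * (q.2 - y₀) * hb + (q.2 - y₀) ^ 2 * hc
  have preimage_eq : f ⁻¹' {q | q.1 * q.2 = t * n} = hypSet a b c x₀ y₀ n := by
    ext q
    simp only [Set.mem_preimage, Set.mem_ofPred_eq, hypSet, pullback_form, mul_right_inj' ht]
  rw [← preimage_eq, Set.image_preimage_eq _ f.surjective]

end Hyperbola

/-- There is an invertible affine transformation of `ℝ²` sending the hyperbola `h` to
`{xy = |n|/Δ²}` and sending `ℤ²` to `p + Λ`, where `Λ ⊇ ℤ²` is a superlattice with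
`det Λ = 1/Δ`; moreover if `gcd(a,b,c) = 1` then `(1,0)` and `(0,1)` are primitive
vectors of `Λ`. -/
theorem statement5 (a b c Δ : ℤ) (hΔ : 0 < Δ)
    (hdisc : (Δ : ℝ) = Real.sqrt ((b : ℝ) ^ 2 - 4 * (a : ℝ) * (c : ℝ)))
    (x₀ y₀ n : ℝ) (hn : n ≠ 0) :
    ∃ (f : (ℝ × ℝ) ≃ᵃ[ℝ] ℝ × ℝ) (p v w : ℝ × ℝ),
      v.1 * w.2 - v.2 * w.1 ≠ 0 ∧
      intLattice ⊆ latticeOf v w ∧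
      detOf v w = 1 / (Δ : ℝ) ∧
      (f '' hypSet a b c x₀ y₀ n) = {q : ℝ × ℝ | q.1 * q.2 = |n| / (Δ : ℝ) ^ 2} ∧
      (f '' intLattice) = translateSet p (latticeOf v w) ∧
      (Int.gcd a (Int.gcd b c) = 1 →
        IsPrimitiveVec (latticeOf v w) (1, 0) ∧ IsPrimitiveVec (latticeOf v w) (0, 1)) := by
  obtain ⟨a', b', c', hhyp, hdisc', hgcd⟩ := exists_hypSet_abs_eq a b c x₀ y₀ n
  obtain ⟨α, β, γ, δ, rfl, rfl, rfl, hdet⟩ := exists_linear_factors_of_discrim_eq_sq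
    Int.prime_two (hdisc'.trans (discrim_eq_sq_of_eq_sqrt hΔ hdisc))
  have hD : (Δ : ℝ) ≠ 0 := Int.cast_ne_zero.2 hΔ.ne'
  replace hdet : (α : ℝ) * δ - β * γ = Δ := by exact_mod_cast hdet
  have hvw := planeDet_div hD hdet
  have hvw₀ := hvw.trans_ne (one_div_ne_zero hD)
  have h₁ := one_zero_eq_smul_add_smul hD hdet
  have h₂ := zero_one_eq_smul_add_smul hD hdet
  refine ⟨planeAffineEquiv (x₀, y₀) _ _ hvw₀, _, (α / Δ, γ / Δ), (β / Δ, δ / Δ), hvw₀,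
    intLattice_subset_latticeOf ⟨δ, -γ, mod_cast h₁⟩ ⟨-β, α, mod_cast h₂⟩, ?_, ?_,
    image_planeAffineEquiv_intLattice _ hvw₀, fun hg => ?_⟩
  · exact (congrArg abs hvw).trans (abs_of_pos (one_div_pos.2 (Int.cast_pos.2 hΔ)))
  · rw [← hhyp, div_eq_inv_mul |n|]
    apply image_planeAffineEquiv_hypSet hvw₀ (inv_ne_zero (pow_ne_zero 2 hD)) <;>
      push_cast <;> ring
  · obtain ⟨hαβ, hγδ⟩ : IsCoprime α β ∧ IsCoprime γ δ :=
      isCoprime_of_isUnit_gcd_coeffs_mul (by simp [← Int.coe_gcd, hgcd, hg])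
    rw [h₁, h₂]
    exact ⟨mod_cast isPrimitiveVec_of_isCoprime hvw₀ hγδ.symm.neg_right,
      mod_cast isPrimitiveVec_of_isCoprime hvw₀ hαβ.symm.neg_left⟩

end
end

section
/- Let n ∈ ℝ_{>0}, p ∈ ℝ², and let Λ ⊇ ℤ² be a superlattice of ℤ². Every vertex of conv(H_n ∩ (p+Λ)), except for the vertex of smallest x-coordinate and the vertex of smallest y-coordinate, lies in the open square (det Λ, n/det Λ + 1)². -/
/-!
Let `Λ` have covolume `d`. Determinants of pairs of vectors of `Λ` are integer multiples of `d`;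
as `(0, 1) ∈ Λ`, so are the first coordinates of the vectors of `Λ`. Hence two points of `p + Λ`
with distinct first coordinates are at least `d` apart in that coordinate, and a vertex `(x, y)`
that is not leftmost has `x > d`, because every point of `H_n` has positive first coordinate.
Likewise `y > d` if the vertex is not lowest.

Since `H_n` is an upper set, if `q - (1, 0)` were in `H_n` for a vertex `q = (x, y)`, then `q` would
be the midpoint of the points `q ± (1, 0)` of `H_n ∩ (p + Λ)`. Thus `(x - 1) y < n`, so
`x < n / y + 1 < n / d + 1` as soon as `y > d`, and symmetrically for `y`.
-/

noncomputable section

/-- The closed region on and above the positive branch of the hyperbola `x*y = n`. -/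
def Hset (n : ℝ) : Set (ℝ × ℝ) := {q | 0 ≤ q.1 ∧ 0 ≤ q.2 ∧ n ≤ q.1 * q.2}

section ExtremePoints

variable {𝕜 E : Type*} [Field 𝕜] [LinearOrder 𝕜] [IsStrictOrderedRing 𝕜] [AddCommGroup E]
  [Module 𝕜 E]

lemma sub_notMem_of_mem_extremePoints_convexHull {S : Set E} {q e : E}
    (hq : q ∈ (convexHull 𝕜 S).extremePoints 𝕜) (he : e ≠ 0) (hadd : q + e ∈ S) :
    q - e ∉ S := fun hsub ↦ by
  have : Invertible (2 : 𝕜) := invertibleOfNonzero two_ne_zero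
  have hqe : q - e = q := hq.2 (subset_convexHull 𝕜 S hsub) (subset_convexHull 𝕜 S hadd)
    (mem_openSegment_sub_add q e)
  exact he (sub_eq_self.1 hqe)

end ExtremePoints

section Lattice

variable {p q q' v w a b : ℝ × ℝ}

lemma coe_closure_pair (v w : ℝ × ℝ) :
    (AddSubgroup.closure {v, w} : Set (ℝ × ℝ)) = latticeOf v w := by
  ext x
  simp only [SetLike.mem_coe, AddSubgroup.mem_closure_pair, latticeOf, Set.mem_ofPred_eq,
    Int.cast_smul_eq_zsmul, eq_comm]

lemma mem_translateSet {S : Set (ℝ × ℝ)} : q ∈ translateSet p S ↔ q - p ∈ S := by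
  simp only [translateSet, Set.image_add_left, Set.mem_preimage, neg_add_eq_sub]

lemma add_mem_translateSet {L : AddSubgroup (ℝ × ℝ)} (hq : q ∈ translateSet p L) (ha : a ∈ L) :
    q + a ∈ translateSet p L := by
  rw [mem_translateSet] at hq ⊢
  rw [add_sub_right_comm]
  exact L.add_mem hq ha

lemma sub_mem_translateSet {L : AddSubgroup (ℝ × ℝ)} (hq : q ∈ translateSet p L) (ha : a ∈ L) :
    q - a ∈ translateSet p L :=
  sub_eq_add_neg q a ▸ add_mem_translateSet hq (L.neg_mem ha)

lemma sub_mem_of_mem_translateSet {L : AddSubgroup (ℝ × ℝ)} (hq : q ∈ translateSet p L)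
    (hq' : q' ∈ translateSet p L) : q - q' ∈ L :=
  sub_sub_sub_cancel_right q q' p ▸
    L.sub_mem (mem_translateSet.1 hq) (mem_translateSet.1 hq')

lemma exists_detOf_eq_natCast_mul (ha : a ∈ AddSubgroup.closure {v, w})
    (hb : b ∈ AddSubgroup.closure {v, w}) : ∃ m : ℕ, detOf a b = m * detOf v w := by
  obtain ⟨i, j, rfl⟩ := AddSubgroup.mem_closure_pair.1 ha
  obtain ⟨k, l, rfl⟩ := AddSubgroup.mem_closure_pair.1 hb
  refine ⟨(i * l - j * k).natAbs, ?_⟩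
  rw [Nat.cast_natAbs, Int.cast_abs, detOf, detOf, ← abs_mul]
  congr 1
  simp only [Prod.fst_add, Prod.snd_add, Prod.smul_fst, Prod.smul_snd,
    ← Int.cast_smul_eq_zsmul ℝ, smul_eq_mul]
  push_cast
  ring

lemma detOf_le_detOf (ha : a ∈ AddSubgroup.closure {v, w}) (hb : b ∈ AddSubgroup.closure {v, w})
    (hab : detOf a b ≠ 0) : detOf v w ≤ detOf a b := by
  obtain ⟨m, hm⟩ := exists_detOf_eq_natCast_mul ha hb
  have hm0 : m ≠ 0 := by
    rintro rfl
    exact hab (by simpa using hm)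
  rw [hm]
  exact le_mul_of_one_le_left (abs_nonneg _) (Nat.one_le_cast.2 (Nat.one_le_iff_ne_zero.2 hm0))

lemma detOf_le_abs_fst (h01 : (0, 1) ∈ AddSubgroup.closure {v, w})
    (ha : a ∈ AddSubgroup.closure {v, w}) (ha0 : a.1 ≠ 0) : detOf v w ≤ |a.1| := by
  have hdet : detOf a (0, 1) = |a.1| := by simp [detOf]
  exact hdet ▸ detOf_le_detOf ha h01 (hdet ▸ abs_ne_zero.2 ha0)

lemma detOf_le_abs_snd (h10 : (1, 0) ∈ AddSubgroup.closure {v, w})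
    (ha : a ∈ AddSubgroup.closure {v, w}) (ha0 : a.2 ≠ 0) : detOf v w ≤ |a.2| := by
  have hdet : detOf (1, 0) a = |a.2| := by simp [detOf]
  exact hdet ▸ detOf_le_detOf h10 ha (hdet ▸ abs_ne_zero.2 ha0)

end Lattice

section Hyperbola

variable {n : ℝ} {p q q' v w e : ℝ × ℝ} {L : AddSubgroup (ℝ × ℝ)}

lemma isUpperSet_Hset (n : ℝ) : IsUpperSet (Hset n) :=
  fun _ _ hle ⟨hx, hy, hxy⟩ ↦ ⟨hx.trans hle.1, hy.trans hle.2,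
    hxy.trans (mul_le_mul hle.1 hle.2 hy (hx.trans hle.1))⟩

lemma fst_pos_of_mem_Hset (hn : 0 < n) (hq : q ∈ Hset n) : 0 < q.1 :=
  pos_of_mul_pos_left (hn.trans_le hq.2.2) hq.2.1

lemma snd_pos_of_mem_Hset (hn : 0 < n) (hq : q ∈ Hset n) : 0 < q.2 :=
  pos_of_mul_pos_right (hn.trans_le hq.2.2) hq.1

lemma mem_Hset_of_div_snd_le_fst (hn : 0 ≤ n) (hy : 0 < q.2) (h : n / q.2 ≤ q.1) : q ∈ Hset n :=
  ⟨(div_nonneg hn hy.le).trans h, hy.le, (div_le_iff₀ hy).1 h⟩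

lemma mem_Hset_of_div_fst_le_snd (hn : 0 ≤ n) (hx : 0 < q.1) (h : n / q.1 ≤ q.2) : q ∈ Hset n :=
  ⟨hx.le, (div_nonneg hn hx.le).trans h, (div_le_iff₀' hx).1 h⟩

lemma sub_notMem_Hset_of_mem_extremePoints
    (hq : q ∈ (convexHull ℝ (Hset n ∩ translateSet p L)).extremePoints ℝ)
    (heL : e ∈ L) (he : 0 < e) : q - e ∉ Hset n := fun hsub ↦ by
  obtain ⟨hqH, hqL⟩ := extremePoints_convexHull_subset hq
  have hadd : q + e ∈ Hset n := isUpperSet_Hset n (le_add_of_nonneg_right he.le) hqH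
  exact sub_notMem_of_mem_extremePoints_convexHull hq he.ne'
    ⟨hadd, add_mem_translateSet hqL heL⟩ ⟨hsub, sub_mem_translateSet hqL heL⟩

lemma fst_lt_div_snd_add_one (hn : 0 < n) (h10 : (1, 0) ∈ L)
    (hq : q ∈ (convexHull ℝ (Hset n ∩ translateSet p L)).extremePoints ℝ) :
    q.1 < n / q.2 + 1 := by
  by_contra! hle
  have hy : 0 < q.2 := snd_pos_of_mem_Hset hn (extremePoints_convexHull_subset hq).1
  refine sub_notMem_Hset_of_mem_extremePoints hq h10 (by simp [Prod.lt_iff]) ?_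
  exact mem_Hset_of_div_snd_le_fst hn.le (by simpa using hy)
    (by simpa using le_sub_right_of_add_le hle)

lemma snd_lt_div_fst_add_one (hn : 0 < n) (h01 : (0, 1) ∈ L)
    (hq : q ∈ (convexHull ℝ (Hset n ∩ translateSet p L)).extremePoints ℝ) :
    q.2 < n / q.1 + 1 := by
  by_contra! hle
  have hx : 0 < q.1 := fst_pos_of_mem_Hset hn (extremePoints_convexHull_subset hq).1
  refine sub_notMem_Hset_of_mem_extremePoints hq h01 (by simp [Prod.lt_iff]) ?_
  exact mem_Hset_of_div_fst_le_snd hn.le (by simpa using hx)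
    (by simpa using le_sub_right_of_add_le hle)

lemma detOf_lt_fst (hn : 0 < n) (h01 : (0, 1) ∈ AddSubgroup.closure {v, w})
    (hq : q ∈ translateSet p (AddSubgroup.closure {v, w}))
    (hq' : q' ∈ Hset n ∩ translateSet p (AddSubgroup.closure {v, w})) (hlt : q'.1 < q.1) :
    detOf v w < q.1 := by
  have hpos : 0 < (q - q').1 := sub_pos.2 hlt
  calc detOf v w ≤ |(q - q').1| :=
        detOf_le_abs_fst h01 (sub_mem_of_mem_translateSet hq hq'.2) hpos.ne'
    _ = q.1 - q'.1 := abs_of_pos hpos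
    _ < q.1 := sub_lt_self _ (fst_pos_of_mem_Hset hn hq'.1)

lemma detOf_lt_snd (hn : 0 < n) (h10 : (1, 0) ∈ AddSubgroup.closure {v, w})
    (hq : q ∈ translateSet p (AddSubgroup.closure {v, w}))
    (hq' : q' ∈ Hset n ∩ translateSet p (AddSubgroup.closure {v, w})) (hlt : q'.2 < q.2) :
    detOf v w < q.2 := by
  have hpos : 0 < (q - q').2 := sub_pos.2 hlt
  calc detOf v w ≤ |(q - q').2| :=
        detOf_le_abs_snd h10 (sub_mem_of_mem_translateSet hq hq'.2) hpos.ne'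
    _ = q.2 - q'.2 := abs_of_pos hpos
    _ < q.2 := sub_lt_self _ (snd_pos_of_mem_Hset hn hq'.1)

end Hyperbola

/-- Every vertex of `conv(H_n ∩ (p + Λ))`, except for the vertex of smallest
`x`-coordinate and the vertex of smallest `y`-coordinate, lies in the open square
`(det Λ, n/det Λ + 1)²`. -/
theorem statement6 (n : ℝ) (hn : 0 < n) (p v w : ℝ × ℝ)
    (hvw : v.1 * w.2 - v.2 * w.1 ≠ 0)
    (hsup : intLattice ⊆ latticeOf v w)
    (q : ℝ × ℝ)
    (hq : q ∈ Set.extremePoints ℝ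
        (convexHull ℝ (Hset n ∩ translateSet p (latticeOf v w))))
    (hnotminx : ∃ q' ∈ Set.extremePoints ℝ
        (convexHull ℝ (Hset n ∩ translateSet p (latticeOf v w))), q'.1 < q.1)
    (hnotminy : ∃ q' ∈ Set.extremePoints ℝ
        (convexHull ℝ (Hset n ∩ translateSet p (latticeOf v w))), q'.2 < q.2) :
    q.1 ∈ Set.Ioo (detOf v w) (n / detOf v w + 1) ∧
    q.2 ∈ Set.Ioo (detOf v w) (n / detOf v w + 1) := by
  simp only [← coe_closure_pair] at hsup hq hnotminx hnotminy
  obtain ⟨a, ha, hax⟩ := hnotminx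
  obtain ⟨b, hb, hby⟩ := hnotminy
  have h10 : (1, 0) ∈ AddSubgroup.closure {v, w} := hsup ⟨1, 0, by simp⟩
  have h01 : (0, 1) ∈ AddSubgroup.closure {v, w} := hsup ⟨0, 1, by simp⟩
  have hd : 0 < detOf v w := abs_pos.2 hvw
  have hqL := (extremePoints_convexHull_subset hq).2
  have hx : detOf v w < q.1 := detOf_lt_fst hn h01 hqL (extremePoints_convexHull_subset ha) hax
  have hy : detOf v w < q.2 := detOf_lt_snd hn h10 hqL (extremePoints_convexHull_subset hb) hby
  refine ⟨⟨hx, ?_⟩, ⟨hy, ?_⟩⟩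
  · calc q.1 < n / q.2 + 1 := fst_lt_div_snd_add_one hn h10 hq
      _ < n / detOf v w + 1 := by gcongr
  · calc q.2 < n / q.1 + 1 := snd_lt_div_fst_add_one hn h01 hq
      _ < n / detOf v w + 1 := by gcongr

end
end

section
/- Let a, b, c ∈ ℤ with Δ := √(b² − 4ac) a positive integer, let x₀, y₀ ∈ ℝ and n ∈ ℝ, n ≠ 0, and let h be the hyperbola {(x,y) : a(x−x₀)² + b(x−x₀)(y−y₀) + c(y−y₀)² = n}. Let H be the closure of one of the two convex connected components of ℝ² \ h. For each asymptote of h, consider the lines parallel to that asymptote which contain points of ℤ² and which intersect H; then each of the ⌊(|n|/Δ)^{1/3}⌋ such lines closest to the asymptote contains a vertex of conv(H ∩ ℤ²). -/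
/-!
The asymptote has a rational direction, so there are linear coordinates `(t, σ)` centred at
`(x₀, y₀)` in which it is the line `t = 0`, the lattice lines parallel to it are vertical lines at
successive integer steps in `t`, each carrying lattice points at unit steps in `σ`, and the
hyperbola is `t σ = M` with `M = |n| / Δ`; the sign is chosen so that `0 ≤ t` at the base point `x`.
The component `t σ < M` is not convex: it contains `(2, 0)` and `(0, 2 M)` but not their midpoint
`(1, M)`. So `H` is the region `0 < t`, `M / t ≤ σ`. The lattice lines meeting `H` are those with
`0 < t`, and their distance to the asymptote is proportional to `t`, so the `m` closest ones satisfy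
`t ≤ m`, that is `t ^ 3 ≤ M` for `m = ⌊M ^ (1 / 3)⌋`.

The lowest lattice point `p` of `H` on such a line at `t = T` satisfies `σ < M / T + 1`. The second
difference of `M / t` at `T` is `2 M / (T (T - 1) (T + 1))`, which exceeds `2` when `1 < T` and
`T ^ 3 ≤ M`; this absorbs the rounding error, and the functional `σ + μ t` with slope
`μ = M / T - M / (T + 1) + 1 = M / (T (T + 1)) + 1` is strictly minimized over the lattice points of
`H` at `p`, which is therefore a vertex. When `T ≤ 1` there is no line on the near side to compete.
-/

noncomputable section

/-- The line through `z` with direction `u`. -/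
def lineThrough (z u : ℝ × ℝ) : Set (ℝ × ℝ) := {q | ∃ t : ℝ, q = z + t • u}

/-! ### Extreme points and distances -/

section General

theorem lt_of_mem_convexHull_of_forall_lt {𝕜 E : Type*} [Field 𝕜] [LinearOrder 𝕜]
    [IsStrictOrderedRing 𝕜] [AddCommGroup E] [Module 𝕜 E] {s : Set E} {p : E} (f : E →ₗ[𝕜] 𝕜)
    (hf : ∀ q ∈ s, q ≠ p → f p < f q) {q : E} (hq : q ∈ convexHull 𝕜 s) (hqp : q ≠ p) :
    f p < f q := by
  have hsub : s ⊆ insert p (s \ {p}) := by simp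
  have hq' := convexHull_mono hsub hq
  rcases (s \ {p}).eq_empty_or_nonempty with hempty | hne
  · rw [hempty, insert_empty_eq, convexHull_singleton] at hq'
    exact absurd hq' hqp
  rw [convexHull_insert hne, convexJoin_singleton_left, Set.mem_iUnion₂] at hq'
  obtain ⟨y, hy, hqy⟩ := hq'
  have hpy : f p < f y :=
    convexHull_min (fun r hr => hf r hr.1 hr.2) ((convex_Ioi (f p)).linear_preimage f) hy
  rw [segment_eq_image'] at hqy
  obtain ⟨θ, ⟨hθ, -⟩, rfl⟩ := hqy
  have hθ' : 0 < θ := hθ.lt_of_ne' fun h => hqp (by simp [h])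
  rw [map_add, map_smul, map_sub, smul_eq_mul]
  exact lt_add_of_pos_right _ (mul_pos hθ' (sub_pos.2 hpy))

theorem mem_extremePoints_convexHull_of_forall_lt {𝕜 E : Type*} [Field 𝕜] [LinearOrder 𝕜]
    [IsStrictOrderedRing 𝕜] [AddCommGroup E] [Module 𝕜 E] {s : Set E} {p : E} (f : E →ₗ[𝕜] 𝕜)
    (hp : p ∈ s) (hf : ∀ q ∈ s, q ≠ p → f p < f q) :
    p ∈ (convexHull 𝕜 s).extremePoints 𝕜 := by
  rw [(convex_convexHull 𝕜 s).mem_extremePoints_iff_convex_sdiff]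
  refine ⟨subset_convexHull 𝕜 s hp, ?_⟩
  have heq : convexHull 𝕜 s \ {p} = convexHull 𝕜 s ∩ f ⁻¹' Set.Ioi (f p) :=
    Set.Subset.antisymm (fun q hq => ⟨hq.1, lt_of_mem_convexHull_of_forall_lt f hf hq.1 hq.2⟩)
      fun q hq => ⟨hq.1, ne_of_apply_ne f (ne_of_gt hq.2)⟩
  rw [heq]
  exact (convex_convexHull 𝕜 s).inter ((convex_Ioi (f p)).linear_preimage f)

theorem infDist_preimage_singleton_mul_norm {𝕜 E : Type*} [NontriviallyNormedField 𝕜]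
    [NormedAddCommGroup E] [NormedSpace 𝕜 E] {ℓ : E →L[𝕜] 𝕜} (hℓ : ℓ ≠ 0) (x : E) (c : 𝕜) :
    Metric.infDist x (ℓ ⁻¹' {c}) * ‖ℓ‖ = ‖ℓ x - c‖ := by
  -- Moving from `x` in a direction `v` with `ℓ v ≠ 0` reaches the hyperplane.
  have hproj : ∀ v, ℓ v ≠ 0 → x - ((ℓ x - c) / ℓ v) • v ∈ ℓ ⁻¹' {c} := fun v hv => by
    simp [div_mul_cancel₀ _ hv]
  obtain ⟨v₀, hv₀⟩ := DFunLike.ne_iff.1 hℓ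
  have hne : (ℓ ⁻¹' {c}).Nonempty := ⟨_, hproj v₀ hv₀⟩
  apply le_antisymm
  · rcases (Metric.infDist_nonneg (x := x) (s := ℓ ⁻¹' {c})).eq_or_lt with hd | hd
    · rw [← hd, zero_mul]
      exact norm_nonneg _
    rw [← le_div_iff₀' hd]
    refine ℓ.opNorm_le_bound (by positivity) fun v => ?_
    rcases eq_or_ne (ℓ v) 0 with hv | hv
    · rw [hv, norm_zero]
      positivity
    have hdist : Metric.infDist x (ℓ ⁻¹' {c}) ≤ ‖ℓ x - c‖ / ‖ℓ v‖ * ‖v‖ := by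
      simpa [dist_eq_norm, norm_smul] using Metric.infDist_le_dist_of_mem (x := x) (hproj v hv)
    rw [div_mul_eq_mul_div, le_div_iff₀' hd]
    rwa [div_mul_eq_mul_div, le_div_iff₀ (norm_pos_iff.2 hv)] at hdist
  · rw [← div_le_iff₀ (norm_pos_iff.2 hℓ), Metric.le_infDist hne]
    rintro y rfl
    rw [div_le_iff₀' (norm_pos_iff.2 hℓ), ← map_sub, dist_eq_norm]
    exact ℓ.le_opNorm _

end General

/-! ### The branches of the hyperbola `p.1 * p.2 = M` -/

/-- The open convex region bounded by the branch of the hyperbola `p.1 * p.2 = M` with `0 < p.1`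
(for `0 < M`). -/
def openBranch (M : ℝ) : Set (ℝ × ℝ) := {p | 0 < p.1 ∧ M < p.1 * p.2}

/-- The closed convex region bounded by the branch of the hyperbola `p.1 * p.2 = M` with `0 < p.1`
(for `0 < M`). -/
def closedBranch (M : ℝ) : Set (ℝ × ℝ) := {p | 0 < p.1 ∧ M ≤ p.1 * p.2}

section Branch

variable {M : ℝ}

theorem isOpen_openBranch : IsOpen (openBranch M) :=
  (isOpen_lt continuous_const continuous_fst).inter
    (isOpen_lt continuous_const (continuous_fst.mul continuous_snd))

theorem isClosed_closedBranch (hM : 0 < M) : IsClosed (closedBranch M) := by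
  have heq : closedBranch M = {p | 0 ≤ p.1} ∩ {p | M ≤ p.1 * p.2} := by
    refine Set.Subset.antisymm (fun p hp => ⟨hp.1.le, hp.2⟩) fun p hp => ⟨?_, hp.2⟩
    exact hp.1.lt_of_ne' (left_ne_zero_of_mul (hM.trans_le hp.2).ne')
  rw [heq]
  exact (isClosed_le continuous_const continuous_fst).inter
    (isClosed_le continuous_const (continuous_fst.mul continuous_snd))

theorem closure_openBranch (hM : 0 < M) : closure (openBranch M) = closedBranch M := by
  have hsub : openBranch M ⊆ closedBranch M := fun p hp => ⟨hp.1, hp.2.le⟩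
  refine (closure_minimal hsub (isClosed_closedBranch hM)).antisymm ?_
  intro p hp
  have hlim : Filter.Tendsto (fun l : ℝ => (p.1, p.2 + l)) (nhdsWithin 0 (Set.Ioi 0)) (nhds p) := by
    have hcont : Continuous fun l : ℝ => (p.1, p.2 + l) := by fun_prop
    simpa using (hcont.tendsto 0).mono_left nhdsWithin_le_nhds
  refine mem_closure_of_tendsto hlim ?_
  filter_upwards [self_mem_nhdsWithin] with l hl
  exact ⟨hp.1, hp.2.trans_lt (mul_lt_mul_of_pos_left (lt_add_of_pos_right _ hl) hp.1)⟩

theorem convex_openBranch (hM : 0 ≤ M) : Convex ℝ (openBranch M) := by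
  have heq : openBranch M = {p : ℝ × ℝ | p.1 ∈ Set.Ioi 0 ∧ M • p.1 ^ (-1 : ℤ) < p.2} := by
    ext p
    refine and_congr_right fun hp => ?_
    rw [zpow_neg_one, smul_eq_mul, ← div_eq_mul_inv, div_lt_iff₀' hp]
  rw [heq]
  exact ((convexOn_zpow (-1)).smul hM).convex_strict_epigraph

theorem connectedComponentIn_compl_of_mem_openBranch (hM : 0 < M) {x : ℝ × ℝ}
    (hx : x ∈ openBranch M) :
    connectedComponentIn {p : ℝ × ℝ | p.1 * p.2 = M}ᶜ x = openBranch M := by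
  have hsub : openBranch M ⊆ {p : ℝ × ℝ | p.1 * p.2 = M}ᶜ := fun p hp => ne_of_gt hp.2
  apply Set.Subset.antisymm
  · refine isPreconnected_connectedComponentIn.subset_of_closure_inter_subset isOpen_openBranch
      ⟨x, mem_connectedComponentIn (hsub hx), hx⟩ ?_
    rw [closure_openBranch hM]
    exact fun p hp => ⟨hp.1.1, hp.1.2.lt_of_ne' (connectedComponentIn_subset _ _ hp.2)⟩
  · exact (convex_openBranch hM.le).isPreconnected.subset_connectedComponentIn hx hsub

theorem isPreconnected_setOf_mul_lt (hM : 0 < M) : IsPreconnected {p : ℝ × ℝ | p.1 * p.2 < M} := by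
  have hstar : StarConvex ℝ (0 : ℝ × ℝ) {p : ℝ × ℝ | p.1 * p.2 < M} := by
    rw [starConvex_zero_iff]
    intro p hp θ hθ₀ hθ₁
    change θ * p.1 * (θ * p.2) < M
    change p.1 * p.2 < M at hp
    have hθ : θ ^ 2 ≤ 1 := pow_le_one₀ hθ₀ hθ₁
    rw [show θ * p.1 * (θ * p.2) = θ ^ 2 * (p.1 * p.2) by ring]
    rcases le_total (p.1 * p.2) 0 with hle | hle
    · exact (mul_nonpos_of_nonneg_of_nonpos (sq_nonneg θ) hle).trans_lt hM
    · exact (mul_le_of_le_one_left hle hθ).trans_lt hp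
  exact (hstar.isPathConnected (by simpa using hM)).isConnected.isPreconnected

theorem not_convex_connectedComponentIn_compl_of_mul_lt (hM : 0 < M) {x : ℝ × ℝ}
    (hx : x.1 * x.2 < M) :
    ¬ Convex ℝ (connectedComponentIn {p : ℝ × ℝ | p.1 * p.2 = M}ᶜ x) := by
  intro hconv
  have hsub : {p : ℝ × ℝ | p.1 * p.2 < M} ⊆ connectedComponentIn {p : ℝ × ℝ | p.1 * p.2 = M}ᶜ x :=
    (isPreconnected_setOf_mul_lt hM).subset_connectedComponentIn hx fun p hp => ne_of_lt hp
  have hmid : midpoint ℝ ((2, 0) : ℝ × ℝ) (0, 2 * M) = (1, M) := by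
    simp [midpoint_eq_smul_add]
  have hmem : midpoint ℝ ((2, 0) : ℝ × ℝ) (0, 2 * M) ∈ {p : ℝ × ℝ | p.1 * p.2 = M}ᶜ :=
    connectedComponentIn_subset _ _ (hconv.midpoint_mem (hsub (by simpa using hM))
      (hsub (by simpa using hM)))
  rw [hmid] at hmem
  exact hmem (one_mul M)

theorem connectedComponentIn_compl_eq_openBranch (hM : 0 < M) {x : ℝ × ℝ}
    (hx : x.1 * x.2 ≠ M) (hx₁ : 0 ≤ x.1)
    (hconv : Convex ℝ (connectedComponentIn {p : ℝ × ℝ | p.1 * p.2 = M}ᶜ x)) :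
    connectedComponentIn {p : ℝ × ℝ | p.1 * p.2 = M}ᶜ x = openBranch M := by
  rcases hx.lt_or_gt with hlt | hgt
  · exact absurd hconv (not_convex_connectedComponentIn_compl_of_mul_lt hM hlt)
  · have hx₁' : 0 < x.1 := hx₁.lt_of_ne' (left_ne_zero_of_mul (hM.trans hgt).ne')
    exact connectedComponentIn_compl_of_mem_openBranch hM ⟨hx₁', hgt⟩

theorem closure_connectedComponentIn_eq_preimage (hM : 0 < M) (Φ : (ℝ × ℝ) ≃ᴬ[ℝ] ℝ × ℝ)
    {x : ℝ × ℝ} (hx : (Φ x).1 * (Φ x).2 ≠ M) (hx₁ : 0 ≤ (Φ x).1)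
    (hconv : Convex ℝ (connectedComponentIn {q | (Φ q).1 * (Φ q).2 = M}ᶜ x)) :
    closure (connectedComponentIn {q | (Φ q).1 * (Φ q).2 = M}ᶜ x) = Φ ⁻¹' closedBranch M := by
  have himage : Φ '' connectedComponentIn {q | (Φ q).1 * (Φ q).2 = M}ᶜ x
      = connectedComponentIn {p : ℝ × ℝ | p.1 * p.2 = M}ᶜ (Φ x) := by
    rw [← Set.image_preimage_eq {p : ℝ × ℝ | p.1 * p.2 = M}ᶜ Φ.surjective]
    exact Φ.toHomeomorph.image_connectedComponentIn hx
  have hconv' := hconv.affine_image Φ.toAffineMap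
  have hbranch := connectedComponentIn_compl_eq_openBranch hM hx hx₁ (himage ▸ hconv')
  rw [← closure_openBranch hM, ← hbranch, ← himage]
  exact (congrArg closure (Set.preimage_image_eq _ Φ.injective)).symm.trans
    (Φ.toHomeomorph.preimage_closure _).symm

end Branch

/-! ### Vertices on vertical lines -/

/-- The lattice `{(j, i + δ j) | i j : ℤ}`, the image of `ℤ²` in coordinates in which the lattice
lines parallel to an asymptote are the vertical lines at integer abscissae. -/
def shearedLattice (δ : ℝ) : AddSubgroup (ℝ × ℝ) := AddSubgroup.closure {(0, 1), (1, δ)}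

section Vertex

variable {M δ : ℝ} {p q : ℝ × ℝ}

theorem mem_shearedLattice :
    p ∈ shearedLattice δ ↔ ∃ i j : ℤ, p = ((j : ℝ), (i : ℝ) + δ * j) := by
  rw [shearedLattice, AddSubgroup.mem_closure_pair]
  refine exists₂_congr fun i j => ?_
  rw [eq_comm]
  simp [mul_comm]

theorem div_add_one_le_div_add_add_mul {𝕜 : Type*} [Field 𝕜] [LinearOrder 𝕜]
    [IsStrictOrderedRing 𝕜] {M T s : 𝕜} (hT : 0 < T) (hTM : T ^ 3 ≤ M) (hs : 1 ≤ |s|)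
    (hTs : 0 < T + s) : M / T + 1 ≤ M / (T + s) + (M / (T * (T + 1)) + 1) * s := by
  have hM : 0 < M := (pow_pos hT 3).trans_le hTM
  have hid : M / (T + s) + (M / (T * (T + 1)) + 1) * s - (M / T + 1)
      = M * (s * (s - 1)) / (T * (T + 1) * (T + s)) - (1 - s) := by
    field_simp
    ring
  rw [← sub_nonneg, hid, sub_nonneg]
  rcases le_abs.1 hs with hs | hs
  · have hfrac : 0 ≤ M * (s * (s - 1)) / (T * (T + 1) * (T + s)) := by
      have : 0 ≤ s - 1 := sub_nonneg.2 hs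
      positivity
    linarith
  · have hprod : (T + s) * (T + 1) ≤ T ^ 2 := by nlinarith
    have hcube : T * (T + 1) * (T + s) ≤ M * -s :=
      calc T * (T + 1) * (T + s) = T * ((T + s) * (T + 1)) := by ring
        _ ≤ T * T ^ 2 := by gcongr
        _ = T ^ 3 := by ring
        _ ≤ M := hTM
        _ ≤ M * -s := le_mul_of_one_le_right hM.le hs
    rw [le_div_iff₀ (by positivity)]
    calc (1 - s) * (T * (T + 1) * (T + s)) ≤ (1 - s) * (M * -s) :=
          mul_le_mul_of_nonneg_left hcube (by linarith)
      _ = M * (s * (s - 1)) := by ring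

theorem snd_lt_snd_of_sub_mem_shearedLattice (hp : p.2 < M / p.1 + 1) (hq : q ∈ closedBranch M)
    (hqp : q - p ∈ shearedLattice δ) (hfst : q.1 = p.1) (hne : q ≠ p) : p.2 < q.2 := by
  obtain ⟨i, j, hij⟩ := mem_shearedLattice.1 hqp
  have hj : q.1 - p.1 = j := congrArg Prod.fst hij
  have hi : q.2 - p.2 = i + δ * j := congrArg Prod.snd hij
  rw [← hj, hfst, sub_self, mul_zero, add_zero] at hi
  have hq₂ : M / p.1 ≤ q.2 := hfst ▸ (div_le_iff₀' hq.1).2 hq.2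
  have hi_nonneg : 0 ≤ i := by
    have : (-1 : ℝ) < i := by linarith
    exact Int.le_of_sub_one_lt (by exact_mod_cast this)
  have hi_ne : i ≠ 0 := by
    rintro rfl
    exact hne (Prod.ext hfst (sub_eq_zero.1 (by simpa using hi)))
  have hi_pos : (0 : ℝ) < i := by exact_mod_cast hi_nonneg.lt_of_ne' hi_ne
  linarith

theorem one_le_abs_fst_sub_of_sub_mem_shearedLattice (hqp : q - p ∈ shearedLattice δ)
    (hfst : q.1 ≠ p.1) : 1 ≤ |q.1 - p.1| := by
  obtain ⟨i, j, hij⟩ := mem_shearedLattice.1 hqp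
  have hj : q.1 - p.1 = j := congrArg Prod.fst hij
  have hj_ne : j ≠ 0 := by
    rintro rfl
    exact hfst (sub_eq_zero.1 (by simpa using hj))
  rw [hj]
  exact_mod_cast Int.one_le_abs hj_ne

theorem snd_add_mul_fst_lt_of_sub_mem_shearedLattice (hp₁ : 0 < p.1) (hpM : p.1 ^ 3 ≤ M)
    (hp₂ : p.2 < M / p.1 + 1) (hq : q ∈ closedBranch M) (hqp : q - p ∈ shearedLattice δ)
    (hne : q ≠ p) :
    p.2 + (M / (p.1 * (p.1 + 1)) + 1) * p.1 < q.2 + (M / (p.1 * (p.1 + 1)) + 1) * q.1 := by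
  by_cases hfst : q.1 = p.1
  · rw [hfst]
    exact add_lt_add_left (snd_lt_snd_of_sub_mem_shearedLattice hp₂ hq hqp hfst hne) _
  · have hkey := div_add_one_le_div_add_add_mul hp₁ hpM
      (one_le_abs_fst_sub_of_sub_mem_shearedLattice hqp hfst) (by simpa using hq.1)
    rw [add_sub_cancel] at hkey
    have hq₂ : M / q.1 ≤ q.2 := (div_le_iff₀' hq.1).2 hq.2
    linarith

theorem exists_mem_extremePoints_fst_eq {c z : ℝ × ℝ} (hz : z ∈ shearedLattice δ)
    (hz₁ : 0 < (z - c).1) (hzM : (z - c).1 ^ 3 ≤ M) :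
    ∃ p ∈ (convexHull ℝ ({q | q - c ∈ closedBranch M} ∩ shearedLattice δ)).extremePoints ℝ,
      p.1 = z.1 := by
  set k : ℤ := ⌈M / (z - c).1 - (z - c).2⌉
  have hp : z + (0, (k : ℝ)) ∈ shearedLattice δ :=
    add_mem hz (mem_shearedLattice.2 ⟨k, 0, by simp⟩)
  have hp_fst : (z + (0, (k : ℝ)) - c).1 = (z - c).1 := by simp
  have hp_snd : (z + (0, (k : ℝ)) - c).2 = (z - c).2 + k := by
    simp only [Prod.snd_add, Prod.snd_sub]
    ring
  have hp_branch : z + (0, (k : ℝ)) - c ∈ closedBranch M := by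
    rw [closedBranch, Set.mem_ofPred_eq, hp_fst, hp_snd, ← div_le_iff₀' hz₁]
    exact ⟨hz₁, sub_le_iff_le_add'.1 (Int.le_ceil _)⟩
  have hp_lt : (z + (0, (k : ℝ)) - c).2 < M / (z + (0, (k : ℝ)) - c).1 + 1 := by
    rw [hp_fst, hp_snd]
    linarith [Int.ceil_lt_add_one (M / (z - c).1 - (z - c).2)]
  let f : ℝ × ℝ →ₗ[ℝ] ℝ :=
    LinearMap.snd ℝ ℝ ℝ + (M / ((z - c).1 * ((z - c).1 + 1)) + 1) • LinearMap.fst ℝ ℝ ℝ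
  refine ⟨_, mem_extremePoints_convexHull_of_forall_lt f ⟨hp_branch, hp⟩ ?_, by simp⟩
  rintro q ⟨hq_branch, hq⟩ hne
  have hlt := snd_add_mul_fst_lt_of_sub_mem_shearedLattice (hp_fst ▸ hz₁) (hp_fst ▸ hzM) hp_lt
    hq_branch ((sub_sub_sub_cancel_right q _ c).symm ▸ sub_mem hq hp)
    fun h => hne (sub_left_injective h)
  rw [hp_fst] at hlt
  rw [← sub_pos, ← map_sub, ← sub_sub_sub_cancel_right q _ c, map_sub, sub_pos]
  simpa [f] using hlt

end Vertex

/-! ### Lattice lines and their distances -/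

section Lines

variable {ψ : (ℝ × ℝ) ≃L[ℝ] ℝ × ℝ} {u : ℝ × ℝ}

theorem mem_lineThrough_iff (hu : u ≠ 0) (hψu : (ψ u).1 = 0) {q z : ℝ × ℝ} :
    q ∈ lineThrough z u ↔ (ψ q).1 = (ψ z).1 := by
  constructor
  · rintro ⟨t, rfl⟩
    simp [hψu]
  · intro h
    have hu₂ : (ψ u).2 ≠ 0 := fun h₂ => hu (ψ.map_eq_zero_iff.1 (Prod.ext hψu h₂))
    refine ⟨((ψ q).2 - (ψ z).2) / (ψ u).2, ψ.injective (Prod.ext ?_ ?_)⟩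
    · simp [h, hψu]
    · simp [div_mul_cancel₀ _ hu₂]

theorem exists_infDist_lineThrough_eq_mul (hu : u ≠ 0) (hψu : (ψ u).1 = 0) (o : ℝ × ℝ) :
    ∃ C > 0, ∀ z, Metric.infDist z (lineThrough o u) = C * |(ψ (z - o)).1| := by
  let ℓ : ℝ × ℝ →L[ℝ] ℝ := (ContinuousLinearMap.fst ℝ ℝ ℝ).comp (ψ : ℝ × ℝ →L[ℝ] ℝ × ℝ)
  have hℓ : ℓ ≠ 0 := DFunLike.ne_iff.2 ⟨ψ.symm (1, 0), by simp [ℓ]⟩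
  have hline : lineThrough o u = ℓ ⁻¹' {ℓ o} := Set.ext fun q => mem_lineThrough_iff hu hψu
  refine ⟨‖ℓ‖⁻¹, inv_pos.2 (norm_pos_iff.2 hℓ), fun z => ?_⟩
  rw [hline, eq_inv_mul_iff_mul_eq₀ (norm_ne_zero_iff.2 hℓ), mul_comm,
    infDist_preimage_singleton_mul_norm hℓ, ← map_sub]
  rfl

theorem lineThrough_inter_closedBranch_nonempty_iff (hu : u ≠ 0) (hψu : (ψ u).1 = 0)
    {M : ℝ} {o z : ℝ × ℝ} :
    (lineThrough z u ∩ {q | ψ (q - o) ∈ closedBranch M}).Nonempty ↔ 0 < (ψ (z - o)).1 := by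
  constructor
  · rintro ⟨q, hqz, hq⟩
    have hfst := (mem_lineThrough_iff hu hψu).1 hqz
    have hpos := hq.1
    rw [map_sub, Prod.fst_sub] at hpos ⊢
    rwa [← hfst]
  · intro hz
    refine ⟨o + ψ.symm ((ψ (z - o)).1, M / (ψ (z - o)).1), (mem_lineThrough_iff hu hψu).2 ?_, ?_⟩
    · simp
    · rw [Set.mem_ofPred_eq, add_sub_cancel_left, ψ.apply_symm_apply]
      exact ⟨hz, (mul_div_cancel₀ M hz.ne').ge⟩

variable {M δ : ℝ} {o z : ℝ × ℝ}

theorem exists_intLattice_fst_apply_sub_eq_iff (hψ : ∀ v, v ∈ intLattice ↔ ψ v ∈ shearedLattice δ)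
    (hz : z ∈ intLattice) {r : ℝ} :
    (∃ z' ∈ intLattice, (ψ (z' - o)).1 = r) ↔ ∃ i : ℤ, (ψ (z - o)).1 - i = r := by
  constructor
  · rintro ⟨z', hz', rfl⟩
    obtain ⟨i, j, hij⟩ := mem_shearedLattice.1 (sub_mem ((hψ z).1 hz) ((hψ z').1 hz'))
    have hj : (ψ z).1 - (ψ z').1 = j := congrArg Prod.fst hij
    refine ⟨j, ?_⟩
    rw [← hj, map_sub, map_sub, Prod.fst_sub, Prod.fst_sub]
    ring
  · rintro ⟨i, rfl⟩
    have hmem : ψ z - ((i : ℝ), δ * i) ∈ shearedLattice δ :=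
      sub_mem ((hψ z).1 hz) (mem_shearedLattice.2 ⟨0, i, by simp⟩)
    refine ⟨ψ.symm (ψ z - ((i : ℝ), δ * i)), (hψ _).2 (by simpa using hmem), ?_⟩
    rw [map_sub ψ, map_sub ψ, ψ.apply_symm_apply]
    exact sub_right_comm _ _ _

theorem setOf_closer_infDist_eq_image (hu : u ≠ 0) (hψu : (ψ u).1 = 0)
    (hψ : ∀ v, v ∈ intLattice ↔ ψ v ∈ shearedLattice δ) (hz : z ∈ intLattice)
    (hz₁ : 0 < (ψ (z - o)).1) {C : ℝ} (hC : 0 < C)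
    (hdist : ∀ z', Metric.infDist z' (lineThrough o u) = C * |(ψ (z' - o)).1|) :
    {d : ℝ | ∃ z' ∈ intLattice, (lineThrough z' u ∩ {q | ψ (q - o) ∈ closedBranch M}).Nonempty ∧
        Metric.infDist z' (lineThrough o u) = d ∧ d < Metric.infDist z (lineThrough o u)}
      = (fun i : ℤ => C * ((ψ (z - o)).1 - i)) '' Set.Ioo 0 ⌈(ψ (z - o)).1⌉ := by
  ext d
  simp only [lineThrough_inter_closedBranch_nonempty_iff hu hψu, hdist, Set.mem_ofPred_eq,
    Set.mem_image, Set.mem_Ioo, Int.lt_ceil, abs_of_pos hz₁]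
  constructor
  · rintro ⟨z', hz', hpos, rfl, hlt⟩
    obtain ⟨i, hi⟩ := (exists_intLattice_fst_apply_sub_eq_iff hψ hz).1 ⟨z', hz', rfl⟩
    rw [abs_of_pos hpos] at hlt ⊢
    rw [mul_lt_mul_iff_right₀ hC, ← hi, sub_lt_self_iff] at hlt
    rw [← hi, sub_pos] at hpos
    exact ⟨i, ⟨by exact_mod_cast hlt, hpos⟩, by rw [hi]⟩
  · rintro ⟨i, ⟨hi, hiT⟩, rfl⟩
    obtain ⟨z', hz', hi'⟩ := (exists_intLattice_fst_apply_sub_eq_iff hψ hz).2 ⟨i, rfl⟩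
    refine ⟨z', hz', hi' ▸ sub_pos.2 hiT, by rw [hi', abs_of_pos (sub_pos.2 hiT)], ?_⟩
    exact mul_lt_mul_of_pos_left (sub_lt_self _ (by exact_mod_cast hi)) hC

theorem fst_apply_sub_le_of_ncard_lt (hu : u ≠ 0) (hψu : (ψ u).1 = 0)
    (hψ : ∀ v, v ∈ intLattice ↔ ψ v ∈ shearedLattice δ) (hz : z ∈ intLattice)
    (hz₁ : 0 < (ψ (z - o)).1) {m : ℤ}
    (hcard : ({d : ℝ | ∃ z' ∈ intLattice,
        (lineThrough z' u ∩ {q | ψ (q - o) ∈ closedBranch M}).Nonempty ∧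
        Metric.infDist z' (lineThrough o u) = d ∧
        d < Metric.infDist z (lineThrough o u)}.ncard : ℤ) < m) :
    (ψ (z - o)).1 ≤ m := by
  obtain ⟨C, hC, hdist⟩ := exists_infDist_lineThrough_eq_mul hu hψu o
  have hinj : Function.Injective fun i : ℤ => C * ((ψ (z - o)).1 - i) := fun i j h => by
    exact_mod_cast sub_right_injective (mul_left_cancel₀ hC.ne' h)
  rw [setOf_closer_infDist_eq_image hu hψu hψ hz hz₁ hC hdist,
    Set.ncard_image_of_injective _ hinj, ← Finset.coe_Ioo, Set.ncard_coe_finset,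
    Int.card_Ioo] at hcard
  exact Int.ceil_le.1 (by lia)

theorem exists_mem_extremePoints_mem_lineThrough (hu : u ≠ 0) (hψu : (ψ u).1 = 0)
    (hψ : ∀ v, v ∈ intLattice ↔ ψ v ∈ shearedLattice δ) (hz : z ∈ intLattice)
    (hz₁ : 0 < (ψ (z - o)).1) (hzM : (ψ (z - o)).1 ^ 3 ≤ M) :
    ∃ q ∈ (convexHull ℝ ({q | ψ (q - o) ∈ closedBranch M} ∩ intLattice)).extremePoints ℝ,
      q ∈ lineThrough z u := by
  have himage : ψ '' ({q | ψ (q - o) ∈ closedBranch M} ∩ intLattice)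
      = {p | p - ψ o ∈ closedBranch M} ∩ shearedLattice δ := by
    ext p
    obtain ⟨q, rfl⟩ := ψ.surjective p
    rw [ψ.injective.mem_set_image]
    exact and_congr (by rw [Set.mem_ofPred_eq, Set.mem_ofPred_eq, map_sub]) (hψ q)
  rw [map_sub] at hz₁ hzM
  obtain ⟨p, hp, hpz⟩ := exists_mem_extremePoints_fst_eq ((hψ z).1 hz) hz₁ hzM
  have hvertices := (image_extremePoints ψ _).trans (congrArg (Set.extremePoints ℝ)
    ((ψ : ℝ × ℝ →ₗ[ℝ] ℝ × ℝ).image_convexHull ({q | ψ (q - o) ∈ closedBranch M} ∩ intLattice)))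
  obtain ⟨q, hq, rfl⟩ := hvertices.superset (himage ▸ hp)
  exact ⟨q, hq, (mem_lineThrough_iff hu hψu).2 hpz⟩

end Lines

/-! ### Coordinates adapted to an asymptote -/

/-- The binary quadratic form `a X² + b X Y + c Y²`. -/
def binaryForm {R : Type*} [CommRing R] (a b c : R) (v : R × R) : R :=
  a * v.1 ^ 2 + b * v.1 * v.2 + c * v.2 ^ 2

section Chart

section Bezout

variable {R : Type*} [CommRing R] {a b c m k r s : R}

theorem eq_smul_add_smul_of_bezout (hbez : m * r + k * s = 1) (v : R × R) :
    v = (m * v.1 + k * v.2) • (r, s) + (s * v.1 - r * v.2) • (k, -m) := by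
  ext
  · simp only [Prod.smul_mk, Prod.mk_add_mk, smul_eq_mul]
    linear_combination -v.1 * hbez
  · simp only [Prod.smul_mk, Prod.mk_add_mk, smul_eq_mul]
    linear_combination -v.2 * hbez

theorem binaryForm_smul_add_smul (w e : R × R) (t σ : R) :
    binaryForm a b c (t • w + σ • e) =
      t * ((2 * a * w.1 * e.1 + b * (w.1 * e.2 + w.2 * e.1) + 2 * c * w.2 * e.2) * σ
        + binaryForm a b c w * t) + σ ^ 2 * binaryForm a b c e := by
  simp only [binaryForm, Prod.fst_add, Prod.snd_add, Prod.smul_fst, Prod.smul_snd, smul_eq_mul]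
  ring

theorem exists_binaryForm_eq_mul_of_bezout (hbez : m * r + k * s = 1)
    (hiso : binaryForm a b c (k, -m) = 0) :
    ∃ α γ, α ^ 2 = b ^ 2 - 4 * a * c ∧ ∀ v : R × R, binaryForm a b c v =
      (m * v.1 + k * v.2) * (α * (s * v.1 - r * v.2) + γ * (m * v.1 + k * v.2)) := by
  refine ⟨2 * a * r * k + b * (r * -m + s * k) + 2 * c * s * -m, binaryForm a b c (r, s),
    ?_, fun v => ?_⟩
  · -- The discriminant is invariant under the unimodular change of basis.
    calc (2 * a * r * k + b * (r * -m + s * k) + 2 * c * s * -m) ^ 2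
        = (b ^ 2 - 4 * a * c) * (m * r + k * s) ^ 2
          + 4 * binaryForm a b c (r, s) * binaryForm a b c (k, -m) := by
          simp only [binaryForm]
          ring
      _ = b ^ 2 - 4 * a * c := by rw [hbez, hiso]; ring
  · conv_lhs => rw [eq_smul_add_smul_of_bezout hbez v, binaryForm_smul_add_smul, hiso, mul_zero,
      add_zero]

theorem binaryForm_eq_zero_of_bezout [NoZeroDivisors R] (hbez : m * r + k * s = 1) {u : R × R}
    (hu₀ : u ≠ 0) (hmk : m * u.1 + k * u.2 = 0) (hu : binaryForm a b c u = 0) :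
    binaryForm a b c (k, -m) = 0 := by
  have hu_eq := eq_smul_add_smul_of_bezout hbez u
  rw [hmk] at hu_eq
  rw [hu_eq, binaryForm_smul_add_smul, zero_mul, zero_add] at hu
  refine (mul_eq_zero.1 hu).resolve_left (pow_ne_zero 2 fun hσ => hu₀ ?_)
  rw [hu_eq, hσ, zero_smul, zero_smul, add_zero]

end Bezout

theorem exists_int_mul_add_mul_eq_zero {R : Type*} [CommRing R] [NoZeroDivisors R] {a b c Δ : ℤ}
    (hΔ₀ : Δ ≠ 0) (hΔ : Δ ^ 2 = b ^ 2 - 4 * a * c) {u : R × R}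
    (hu : binaryForm (a : R) b c u = 0) :
    ∃ m k : ℤ, (m, k) ≠ 0 ∧ (m : R) * u.1 + k * u.2 = 0 := by
  rw [binaryForm] at hu
  rcases eq_or_ne a 0 with rfl | ha
  · have hb : b ≠ 0 := by
      rintro rfl
      exact hΔ₀ (pow_eq_zero_iff two_ne_zero |>.1 (by simpa using hΔ))
    have hprod : u.2 * (b * u.1 + c * u.2) = 0 := by
      rw [← hu, Int.cast_zero]
      ring
    rcases mul_eq_zero.1 hprod with h | h
    · exact ⟨0, 1, by simp, by simpa using h⟩
    · exact ⟨b, c, by simp [hb], h⟩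
  · have hΔ' : (Δ : R) ^ 2 = (b : R) ^ 2 - 4 * a * c := by
      exact_mod_cast congrArg (Int.cast : ℤ → R) hΔ
    have hprod : (2 * a * u.1 + (b - Δ) * u.2) * (2 * a * u.1 + (b + Δ) * u.2) = 0 := by
      linear_combination 4 * a * hu - u.2 ^ 2 * hΔ'
    rcases mul_eq_zero.1 hprod with h | h
    · exact ⟨2 * a, b - Δ, by simp [ha], by simpa using h⟩
    · exact ⟨2 * a, b + Δ, by simp [ha], by simpa using h⟩

theorem exists_isCoprime_mul_add_mul_eq_zero {a b c Δ : ℤ} (hΔ₀ : Δ ≠ 0)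
    (hΔ : Δ ^ 2 = b ^ 2 - 4 * a * c) {u : ℝ × ℝ} (hu : binaryForm (a : ℝ) b c u = 0)
    (v : ℝ × ℝ) : ∃ m k : ℤ, IsCoprime m k ∧ (m : ℝ) * u.1 + k * u.2 = 0 ∧
      0 ≤ (m : ℝ) * v.1 + k * v.2 := by
  obtain ⟨m', k', hne, hzero⟩ := exists_int_mul_add_mul_eq_zero hΔ₀ hΔ hu
  have hg : 0 < m'.gcd k' := by
    rw [Int.gcd_pos_iff]
    by_contra! h
    exact hne (Prod.ext h.1 h.2)
  obtain ⟨m, k, hmk, hm, hk⟩ := Int.exists_gcd_one hg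
  generalize m'.gcd k' = g at hg hm hk
  subst hm hk
  have hzero' : (m : ℝ) * u.1 + k * u.2 = 0 := by
    refine (mul_eq_zero.1 ?_).resolve_left (Nat.cast_ne_zero.2 hg.ne' : (g : ℝ) ≠ 0)
    push_cast at hzero
    linear_combination hzero
  have hcop : IsCoprime m k := Int.isCoprime_iff_gcd_eq_one.2 hmk
  rcases le_total 0 ((m : ℝ) * v.1 + k * v.2) with hv | hv
  · exact ⟨m, k, hcop, hzero', hv⟩
  · refine ⟨-m, -k, hcop.neg_neg, ?_, ?_⟩
    · push_cast
      linear_combination -hzero'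
    · push_cast
      linear_combination hv

theorem exists_continuousLinearEquiv_apply_eq {m k r s η : ℝ} (hbez : m * r + k * s = 1)
    (hη : η ≠ 0) (δ : ℝ) : ∃ ψ : (ℝ × ℝ) ≃L[ℝ] ℝ × ℝ, ∀ v,
      ψ v = (m * v.1 + k * v.2, η * (s * v.1 - r * v.2) + δ * (m * v.1 + k * v.2)) := by
  let f : ℝ × ℝ →ₗ[ℝ] ℝ × ℝ :=
    { toFun v := (m * v.1 + k * v.2, η * (s * v.1 - r * v.2) + δ * (m * v.1 + k * v.2))
      map_add' v w := by ext <;> simp only [Prod.fst_add, Prod.snd_add] <;> ring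
      map_smul' t v := by
        ext <;> simp only [Prod.smul_fst, Prod.smul_snd, smul_eq_mul, RingHom.id_apply] <;> ring }
  have hf : Function.Injective f := by
    rw [← LinearMap.ker_eq_bot, LinearMap.ker_eq_bot']
    intro v hv
    have h₁ : m * v.1 + k * v.2 = 0 := congrArg Prod.fst hv
    have h₂ : η * (s * v.1 - r * v.2) + δ * (m * v.1 + k * v.2) = 0 := congrArg Prod.snd hv
    rw [h₁, mul_zero, add_zero] at h₂
    have hσ := (mul_eq_zero.1 h₂).resolve_left hη
    rw [eq_smul_add_smul_of_bezout hbez v, h₁, hσ, zero_smul, zero_smul, add_zero]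
  exact ⟨(LinearEquiv.ofInjectiveEndo f hf).toContinuousLinearEquiv, fun v => rfl⟩

theorem mem_intLattice_iff_mem_shearedLattice {m k r s η : ℤ} (hbez : m * r + k * s = 1)
    (hη : η ^ 2 = 1) (δ : ℝ) (v : ℝ × ℝ) : v ∈ intLattice ↔
      ((m * v.1 + k * v.2, η * (s * v.1 - r * v.2) + δ * (m * v.1 + k * v.2)) : ℝ × ℝ)
        ∈ shearedLattice δ := by
  rw [mem_shearedLattice]
  constructor
  · rintro ⟨x, y, rfl⟩
    exact ⟨η * (s * x - r * y), m * x + k * y, by push_cast; rfl⟩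
  · rintro ⟨i, j, hij⟩
    have h₁ : m * v.1 + k * v.2 = j := congrArg Prod.fst hij
    have h₂ : η * (s * v.1 - r * v.2) + δ * (m * v.1 + k * v.2) = i + δ * j :=
      congrArg Prod.snd hij
    rw [h₁, add_left_inj] at h₂
    have hη' : (η : ℝ) ^ 2 = 1 := by exact_mod_cast hη
    have hσ : s * v.1 - r * v.2 = η * i := by
      linear_combination η * h₂ - (s * v.1 - r * v.2) * hη'
    have hbez' : (m : ℝ) * r + k * s = 1 := by exact_mod_cast hbez
    refine ⟨j * r + η * i * k, j * s + η * i * -m, ?_⟩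
    rw [eq_smul_add_smul_of_bezout hbez' v, h₁, hσ]
    push_cast
    rfl

theorem exists_adapted_coordinates {a b c Δ : ℤ} (hΔ : Δ ^ 2 = b ^ 2 - 4 * a * c)
    {u : ℝ × ℝ} (hu₀ : u ≠ 0) (hu : binaryForm (a : ℝ) b c u = 0) {κ : ℝ}
    (hκ : (κ * Δ) ^ 2 = 1) (v₀ : ℝ × ℝ) :
    ∃ (ψ : (ℝ × ℝ) ≃L[ℝ] ℝ × ℝ) (δ : ℝ), (ψ u).1 = 0 ∧ 0 ≤ (ψ v₀).1 ∧
      (∀ v, (ψ v).1 * (ψ v).2 = κ * binaryForm (a : ℝ) b c v) ∧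
      ∀ v, v ∈ intLattice ↔ ψ v ∈ shearedLattice δ := by
  have hΔ₀ : Δ ≠ 0 := by
    rintro rfl
    simp at hκ
  obtain ⟨m, k, ⟨r, s, hbez⟩, hmk, hv₀⟩ := exists_isCoprime_mul_add_mul_eq_zero hΔ₀ hΔ hu v₀
  rw [mul_comm r, mul_comm s] at hbez
  have hbez' : (m : ℝ) * r + k * s = 1 := by exact_mod_cast hbez
  obtain ⟨α, γ, hα, hfactor⟩ :=
    exists_binaryForm_eq_mul_of_bezout hbez' (binaryForm_eq_zero_of_bezout hbez' hu₀ hmk hu)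
  obtain ⟨η, hη, hηα⟩ : ∃ η : ℤ, η ^ 2 = 1 ∧ (η : ℝ) = κ * α := by
    have hΔ' : (Δ : ℝ) ^ 2 = (b : ℝ) ^ 2 - 4 * a * c := by exact_mod_cast hΔ
    have hsq : (κ * α) ^ 2 = 1 := by rw [mul_pow, hα, ← hΔ', ← mul_pow, hκ]
    rcases sq_eq_one_iff.1 hsq with h | h
    · exact ⟨1, by norm_num, by simp [h]⟩
    · exact ⟨-1, by norm_num, by simp [h]⟩
  have hη₀ : (η : ℝ) ≠ 0 := Int.cast_ne_zero.2 (pow_ne_zero_iff two_ne_zero |>.1 (hη ▸ one_ne_zero))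
  obtain ⟨ψ, hψ⟩ := exists_continuousLinearEquiv_apply_eq hbez' hη₀ (κ * γ)
  refine ⟨ψ, κ * γ, by rw [hψ, hmk], by rwa [hψ], fun v => ?_, fun v => ?_⟩
  · rw [hψ, hfactor, hηα]
    ring
  · rw [hψ]
    exact mem_intLattice_iff_mem_shearedLattice hbez hη (κ * γ) v

theorem closure_connectedComponentIn_compl_hypSet {a b c : ℤ} {x₀ y₀ n κ M : ℝ} (hM : 0 < M)
    (hκ : κ * n = M) {ψ : (ℝ × ℝ) ≃L[ℝ] ℝ × ℝ}
    (hψ : ∀ v, (ψ v).1 * (ψ v).2 = κ * binaryForm (a : ℝ) b c v) {x : ℝ × ℝ}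
    (hx : x ∉ hypSet a b c x₀ y₀ n) (hx₁ : 0 ≤ (ψ (x - (x₀, y₀))).1)
    (hconv : Convex ℝ (connectedComponentIn (hypSet a b c x₀ y₀ n)ᶜ x)) :
    closure (connectedComponentIn (hypSet a b c x₀ y₀ n)ᶜ x)
      = {q | ψ (q - (x₀, y₀)) ∈ closedBranch M} := by
  let Φ : (ℝ × ℝ) ≃ᴬ[ℝ] ℝ × ℝ :=
    (ContinuousAffineEquiv.constVAdd ℝ (ℝ × ℝ) (-(x₀, y₀))).trans ψ.toContinuousAffineEquiv
  have hΦ : ∀ q, Φ q = ψ (q - (x₀, y₀)) := fun q => congrArg ψ (neg_add_eq_sub _ q)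
  have hhyp : hypSet a b c x₀ y₀ n = {q | (Φ q).1 * (Φ q).2 = M} := by
    have hκ₀ : κ ≠ 0 := left_ne_zero_of_mul (hκ ▸ hM.ne')
    ext q
    rw [Set.mem_ofPred_eq, hΦ, hψ, ← hκ, mul_right_inj' hκ₀]
    rfl
  rw [hhyp] at hx hconv ⊢
  rw [closure_connectedComponentIn_eq_preimage hM Φ hx (hΦ x ▸ hx₁) hconv]
  simp only [Set.preimage, hΦ]

end Chart

theorem pow_three_le_of_le_floor_rpow {T M : ℝ} (hT : 0 ≤ T) (hM : 0 ≤ M)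
    (h : T ≤ ⌊M ^ ((1 : ℝ) / 3)⌋) : T ^ 3 ≤ M := by
  have hroot : T ≤ M ^ (3 : ℝ)⁻¹ := one_div (3 : ℝ) ▸ h.trans (Int.floor_le _)
  exact_mod_cast (Real.le_rpow_inv_iff_of_pos hT hM three_pos).1 hroot

/-- Each of the `⌊(|n|/Δ)^(1/3)⌋` lattice lines parallel to an asymptote of the
hyperbola, intersecting `H` and closest to that asymptote, contains a vertex of
`conv(H ∩ ℤ²)`.  Here `u ≠ 0` is an asymptote direction (an isotropic direction of
the quadratic form) and the asymptote is the line through the center `(x₀, y₀)` with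
direction `u`; a lattice line parallel to it is `z + ℝu` with `z ∈ ℤ²`, and lines are
compared by their distance to the asymptote. -/
theorem statement8 (a b c Δ : ℤ) (hΔ : 0 < Δ)
    (hdisc : (Δ : ℝ) = Real.sqrt ((b : ℝ) ^ 2 - 4 * (a : ℝ) * (c : ℝ)))
    (x₀ y₀ n : ℝ) (hn : n ≠ 0)
    (x : ℝ × ℝ) (hx : x ∉ hypSet a b c x₀ y₀ n)
    (K : Set (ℝ × ℝ)) (hK : K = connectedComponentIn (hypSet a b c x₀ y₀ n)ᶜ x)
    (hKconv : Convex ℝ K)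
    (H : Set (ℝ × ℝ)) (hH : H = closure K)
    (u : ℝ × ℝ) (hu0 : u ≠ 0)
    (hasym : (a : ℝ) * u.1 ^ 2 + (b : ℝ) * u.1 * u.2 + (c : ℝ) * u.2 ^ 2 = 0)
    (z : ℝ × ℝ) (hz : z ∈ intLattice)
    (hzH : (lineThrough z u ∩ H).Nonempty)
    (hclose : (({d : ℝ | ∃ z' ∈ intLattice, (lineThrough z' u ∩ H).Nonempty ∧
          Metric.infDist z' (lineThrough (x₀, y₀) u) = d ∧
          d < Metric.infDist z (lineThrough (x₀, y₀) u)}).ncard : ℤ) <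
        ⌊(|n| / (Δ : ℝ)) ^ ((1 : ℝ) / 3)⌋) :
    ∃ q ∈ Set.extremePoints ℝ (convexHull ℝ (H ∩ intLattice)), q ∈ lineThrough z u := by
  have hΔ_real : (0 : ℝ) < Δ := Int.cast_pos.2 hΔ
  have hΔ_sq : Δ ^ 2 = b ^ 2 - 4 * a * c := by
    rw [sq]
    exact_mod_cast (Real.sqrt_eq_iff_mul_self_eq_of_pos hΔ_real).1 hdisc.symm
  set M := |n| / Δ
  have hM : 0 < M := div_pos (abs_pos.2 hn) hΔ_real
  have hκ : (M / n * Δ) ^ 2 = 1 := by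
    rw [div_mul_eq_mul_div, div_mul_cancel₀ _ hΔ_real.ne', div_pow, sq_abs,
      div_self (pow_ne_zero 2 hn)]
  obtain ⟨ψ, δ, hψu, hψx, hψ, hlattice⟩ :=
    exists_adapted_coordinates hΔ_sq hu0 hasym hκ (x - (x₀, y₀))
  obtain rfl : H = {q | ψ (q - (x₀, y₀)) ∈ closedBranch M} := by
    rw [hH, hK]
    exact closure_connectedComponentIn_compl_hypSet hM (div_mul_cancel₀ M hn) hψ hx hψx
      (hK ▸ hKconv)
  have hz₁ := (lineThrough_inter_closedBranch_nonempty_iff hu0 hψu).1 hzH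
  have hheight := fst_apply_sub_le_of_ncard_lt hu0 hψu hlattice hz hz₁ hclose
  exact exists_mem_extremePoints_mem_lineThrough hu0 hψu hlattice hz hz₁
    (pow_three_le_of_le_floor_rpow hz₁.le hM.le hheight)

end
end

section
/- Let n ∈ ℝ_{>0}, p ∈ ℝ², and let Γ be a vertical shear lattice. Suppose q = (q_x, q_y) ∈ H_n ∩ (p+Γ) satisfies q_x > 1 and q_y < min{ n·q_x/(q_x² − 1), n/q_x + 1 }. Then q is a vertex of conv(H_n ∩ (p+Γ)). -/
/-!
Put `c = n / (q_x² - 1)`. The chord of the hyperbola `xy = n` over `[q_x - 1, q_x + 1]` is the line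
`y = c (2 q_x - x)`. By convexity the hyperbola lies on or above this line outside the open interval
`(q_x - 1, q_x + 1)`, while `q_y < n q_x / (q_x² - 1)` says that `q` lies strictly below it.
Abscissae of points of `p + Γ` differ from `q_x` by integers, so every point of `H_n ∩ (p + Γ)` with
abscissa other than `q_x` has a larger value of `c x + y` than `q`. On the vertical line through
`q`, points of `p + Γ` differ by integers, and `q_y - 1 < n / q_x` rules out those below `q`. Hence
`q` is the unique minimiser of the linear functional `c x + y`, and so an extreme point.

The lattice enters only through the horizontal gap and the vertical gap that separate `q` from the
other points, both equal to `1` here; the argument works for arbitrary gaps `δ` and `ε`.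
-/

noncomputable section

section UniqueMinimiser

variable {𝕜 E : Type*} [Field 𝕜] [LinearOrder 𝕜] [IsStrictOrderedRing 𝕜] [AddCommGroup E]
  [Module 𝕜 E]

theorem convex_insert_setOf_lt (f : E →ₗ[𝕜] 𝕜) (x : E) :
    Convex 𝕜 (insert x {y | f x < f y}) := by
  have hle : ∀ y ∈ insert x {y | f x < f y}, f x ≤ f y := by
    rintro y (rfl | hy)
    exacts [le_rfl, hy.le]
  rw [convex_iff_forall_pos]
  intro u hu v hv a b ha hb hab
  have hx : f x = a * f x + b * f x := by rw [← add_mul, hab, one_mul]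
  have mem_of_lt (hlt : a * f x + b * f x < a * f u + b * f v) :
      a • u + b • v ∈ insert x {y | f x < f y} := Or.inr (by simpa [← hx] using hlt)
  have hau : a * f x ≤ a * f u := mul_le_mul_of_nonneg_left (hle u hu) ha.le
  have hbv : b * f x ≤ b * f v := mul_le_mul_of_nonneg_left (hle v hv) hb.le
  rcases hu with hu_eq | hu_lt
  · rcases hv with hv_eq | hv_lt
    · exact Or.inl (by rw [hu_eq, hv_eq, Convex.combo_self hab])
    · exact mem_of_lt (add_lt_add_of_le_of_lt hau (mul_lt_mul_of_pos_left hv_lt hb))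
  · exact mem_of_lt (add_lt_add_of_lt_of_le (mul_lt_mul_of_pos_left hu_lt ha) hbv)

theorem mem_extremePoints_insert_setOf_lt (f : E →ₗ[𝕜] 𝕜) (x : E) :
    x ∈ Set.extremePoints 𝕜 (insert x {y | f x < f y}) := by
  rw [(convex_insert_setOf_lt f x).mem_extremePoints_iff_convex_sdiff,
    Set.insert_sdiff_self_of_notMem (by simp)]
  exact ⟨Set.mem_insert _ _, convex_halfSpace_gt f.isLinear _⟩

theorem mem_extremePoints_convexHull_of_forall_lt_s10 {S : Set E} {x : E} (hx : x ∈ S)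
    (f : E →ₗ[𝕜] 𝕜) (hf : ∀ y ∈ S, y ≠ x → f x < f y) :
    x ∈ Set.extremePoints 𝕜 (convexHull 𝕜 S) := by
  have hS : S ⊆ insert x {y | f x < f y} := fun y hy => or_iff_not_imp_left.2 (hf y hy)
  exact inter_extremePoints_subset_extremePoints_of_subset
    (convexHull_min hS (convex_insert_setOf_lt f x))
    ⟨subset_convexHull 𝕜 S hx, mem_extremePoints_insert_setOf_lt f x⟩

end UniqueMinimiser

section Hyperbola

variable {n δ ε : ℝ} {q r : ℝ × ℝ}

theorem hyperbola_chord_le {a b x y : ℝ} (hn : 0 ≤ n) (hab : 0 < a * b) (hx : 0 < x)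
    (hout : 0 ≤ (x - a) * (x - b)) (hxy : n ≤ x * y) : n / (a * b) * (a + b - x) ≤ y := by
  have hprod : x * (a + b - x) ≤ a * b := by linarith
  refine le_of_mul_le_mul_left ?_ hx
  calc x * (n / (a * b) * (a + b - x)) = n / (a * b) * (x * (a + b - x)) := by ring
    _ ≤ n / (a * b) * (a * b) := mul_le_mul_of_nonneg_left hprod (div_nonneg hn hab.le)
    _ = n := div_mul_cancel₀ n hab.ne'
    _ ≤ x * y := hxy

theorem fst_pos_of_mem_Hset_s10 (hn : 0 < n) (hr : r ∈ Hset n) : 0 < r.1 :=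
  pos_of_mul_pos_left (hn.trans_le hr.2.2) hr.2.1

theorem lt_of_mem_Hset_of_le_abs_fst_sub (hn : 0 < n) (hδ : 0 ≤ δ) (hqx : δ < q.1)
    (hqy : q.2 < n * q.1 / (q.1 ^ 2 - δ ^ 2)) (hr : r ∈ Hset n) (hqr : δ ≤ |r.1 - q.1|) :
    n / (q.1 ^ 2 - δ ^ 2) * q.1 + q.2 < n / (q.1 ^ 2 - δ ^ 2) * r.1 + r.2 := by
  have hfactor : q.1 ^ 2 - δ ^ 2 = (q.1 - δ) * (q.1 + δ) := by ring
  have hpos : 0 < (q.1 - δ) * (q.1 + δ) := mul_pos (by linarith) (by linarith)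
  have hsq : δ ^ 2 ≤ (r.1 - q.1) ^ 2 := sq_le_sq.2 (by rwa [abs_of_nonneg hδ])
  have hout : 0 ≤ (r.1 - (q.1 - δ)) * (r.1 - (q.1 + δ)) := by linarith
  have hchord := hyperbola_chord_le hn.le hpos (fst_pos_of_mem_Hset_s10 hn hr) hout hr.2.2
  rw [mul_div_right_comm] at hqy
  rw [← hfactor] at hchord
  linarith

theorem snd_lt_of_mem_Hset_of_le_abs_snd_sub (hq : 0 < q.1) (hqy : q.2 < n / q.1 + ε)
    (hr : r ∈ Hset n) (hfst : r.1 = q.1) (hqr : ε ≤ |r.2 - q.2|) :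
    q.2 < r.2 := by
  have habove : n / q.1 ≤ r.2 := (div_le_iff₀' hq).2 (hfst ▸ hr.2.2)
  by_contra! hle
  rw [abs_of_nonpos (sub_nonpos.2 hle)] at hqr
  linarith

end Hyperbola

section Lattice

variable {p q r : ℝ × ℝ} {w s h : ℝ}

theorem exists_int_sub_eq_of_mem_translateSet_latticeOf {v u : ℝ × ℝ}
    (hq : q ∈ translateSet p (latticeOf v u)) (hr : r ∈ translateSet p (latticeOf v u)) :
    ∃ a b : ℤ, r - q = (a : ℝ) • v + (b : ℝ) • u := by
  obtain ⟨_, ⟨a, b, rfl⟩, rfl⟩ := hq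
  obtain ⟨_, ⟨a', b', rfl⟩, rfl⟩ := hr
  refine ⟨a' - a, b' - b, ?_⟩
  push_cast
  module

theorem abs_le_abs_intCast_mul {k : ℤ} (hk : k ≠ 0) (x : ℝ) : |x| ≤ |k * x| := by
  rw [abs_mul]
  exact le_mul_of_one_le_left (abs_nonneg x) (by exact_mod_cast Int.one_le_abs hk)

theorem abs_le_abs_fst_sub_of_mem_latticeOf
    (hq : q ∈ translateSet p (latticeOf (w, s) (0, h)))
    (hr : r ∈ translateSet p (latticeOf (w, s) (0, h))) (hne : r.1 ≠ q.1) :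
    |w| ≤ |r.1 - q.1| := by
  obtain ⟨a, b, hab⟩ := exists_int_sub_eq_of_mem_translateSet_latticeOf hq hr
  have hfst : r.1 - q.1 = a * w := by simpa using congrArg Prod.fst hab
  have ha : a ≠ 0 := by
    rintro rfl
    exact hne (sub_eq_zero.1 (by simpa using hfst))
  exact hfst ▸ abs_le_abs_intCast_mul ha w

theorem abs_le_abs_snd_sub_of_mem_latticeOf (hw : w ≠ 0)
    (hq : q ∈ translateSet p (latticeOf (w, s) (0, h)))
    (hr : r ∈ translateSet p (latticeOf (w, s) (0, h))) (hfst : r.1 = q.1) (hne : r.2 ≠ q.2) :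
    |h| ≤ |r.2 - q.2| := by
  obtain ⟨a, b, hab⟩ := exists_int_sub_eq_of_mem_translateSet_latticeOf hq hr
  have ha : a = 0 := by simpa [hfst, hw] using congrArg Prod.fst hab
  have hsnd : r.2 - q.2 = b * h := by simpa [ha] using congrArg Prod.snd hab
  have hb : b ≠ 0 := by
    rintro rfl
    exact hne (sub_eq_zero.1 (by simpa using hsnd))
  exact hsnd ▸ abs_le_abs_intCast_mul hb h

end Lattice

theorem statement10_general {n δ ε : ℝ} (hn : 0 < n) (hδ : 0 ≤ δ) {L : Set (ℝ × ℝ)} {q : ℝ × ℝ}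
    (hfst : ∀ r ∈ L, r.1 ≠ q.1 → δ ≤ |r.1 - q.1|)
    (hsnd : ∀ r ∈ L, r.1 = q.1 → r.2 ≠ q.2 → ε ≤ |r.2 - q.2|)
    (hq : q ∈ Hset n ∩ L) (hqx : δ < q.1)
    (hqy : q.2 < min (n * q.1 / (q.1 ^ 2 - δ ^ 2)) (n / q.1 + ε)) :
    q ∈ Set.extremePoints ℝ (convexHull ℝ (Hset n ∩ L)) := by
  obtain ⟨hbelow_chord, hbelow_next⟩ := lt_min_iff.1 hqy
  let f : ℝ × ℝ →ₗ[ℝ] ℝ :=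
    (n / (q.1 ^ 2 - δ ^ 2)) • LinearMap.fst ℝ ℝ ℝ + LinearMap.snd ℝ ℝ ℝ
  refine mem_extremePoints_convexHull_of_forall_lt_s10 hq f fun r ⟨hrH, hrL⟩ hne => ?_
  change n / (q.1 ^ 2 - δ ^ 2) * q.1 + q.2 < n / (q.1 ^ 2 - δ ^ 2) * r.1 + r.2
  by_cases hcol : r.1 = q.1
  · have hne_snd : r.2 ≠ q.2 := fun h => hne (Prod.ext hcol h)
    have hlt : q.2 < r.2 := snd_lt_of_mem_Hset_of_le_abs_snd_sub (hδ.trans_lt hqx) hbelow_next hrH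
      hcol (hsnd r hrL hcol hne_snd)
    simpa only [hcol, add_lt_add_iff_left] using hlt
  · exact lt_of_mem_Hset_of_le_abs_fst_sub hn hδ hqx hbelow_chord hrH (hfst r hrL hcol)

/-- If `Γ` is a vertical shear lattice (generated by `(1,s)` and `(0,1)`) and
`q ∈ H_n ∩ (p+Γ)` satisfies `q_x > 1` and
`q_y < min {n q_x/(q_x² - 1), n/q_x + 1}`, then `q` is a vertex of
`conv(H_n ∩ (p+Γ))`. -/
theorem statement10 (n : ℝ) (hn : 0 < n) (p : ℝ × ℝ) (s : ℝ)
    (q : ℝ × ℝ)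
    (hq : q ∈ Hset n ∩ translateSet p (latticeOf (1, s) (0, 1)))
    (hqx : 1 < q.1)
    (hqy : q.2 < min (n * q.1 / (q.1 ^ 2 - 1)) (n / q.1 + 1)) :
    q ∈ Set.extremePoints ℝ
      (convexHull ℝ (Hset n ∩ translateSet p (latticeOf (1, s) (0, 1)))) := by
  refine statement10_general (δ := 1) (ε := 1) hn zero_le_one (fun r hr hne => ?_)
    (fun r hr hcol hne => ?_) hq hqx (by simpa only [one_pow] using hqy)
  · simpa only [abs_one] using abs_le_abs_fst_sub_of_mem_latticeOf hq.2 hr hne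
  · simpa only [abs_one] using abs_le_abs_snd_sub_of_mem_latticeOf one_ne_zero hq.2 hr hcol hne

end
end

section
/- Let a, b, c ∈ ℤ with Δ := √(b² − 4ac) a positive integer, let x₀, y₀ ∈ ℝ and n ∈ ℝ, n ≠ 0, and let h be the hyperbola {(x,y) : a(x−x₀)² + b(x−x₀)(y−y₀) + c(y−y₀)² = n}. Then there exists an invertible affine transformation of ℝ² sending h to the hyperbola {(x,y) : xy = |n|} and sending ℤ² to p + Λ, where p ∈ ℝ² and Λ ⊆ ℤ² is a sublattice with det Λ = Δ. Moreover, if gcd(a,b,c) = 1 then Λ is reduced. -/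
/-!
A binary quadratic form over `ℤ` with square discriminant `Δ²` splits over `ℤ` as
`(p x + q y) (r x + s y)` with `p s - q r = Δ`: writing `b + Δ = 2 u`, one has
`u (b - u) = a c`, and refining these two factorizations of the same integer gives
`u = p s`, `b - u = q r`, `a = p r`, `c = q s`. For `n > 0`, taking the two linear forms, centred
at `(x₀, y₀)`, as new coordinates turns the hyperbola into `x y = n` and `ℤ²` into a translate of
the lattice spanned by `(p, r)` and `(q, s)`. For `n < 0` one negates the equation. The projections
of the lattice are `pℤ + qℤ` and `rℤ + sℤ`; each of these ideals contains `a`, `b` and `c`, hence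
is all of `ℤ` when `gcd(a, b, c) = 1`.
-/

noncomputable section

/-- A sublattice `Λ ⊆ ℤ²` is reduced if both coordinate projections of `Λ` equal `ℤ`. -/
def IsReducedLattice (Λ : Set (ℝ × ℝ)) : Prop :=
  Prod.fst '' Λ = Set.range (fun a : ℤ => (a : ℝ)) ∧
  Prod.snd '' Λ = Set.range (fun a : ℤ => (a : ℝ))

lemma exists_refinement_of_mul_eq_mul {M : Type*} [CommMonoidWithZero M] [IsCancelMulZero M]
    [DecompositionMonoid M] {u t a c : M} (h : u * t = a * c) :
    ∃ p q r s : M, u = p * s ∧ t = q * r ∧ a = p * r ∧ c = q * s := by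
  obtain ⟨p, s, ⟨r, rfl⟩, ⟨q, rfl⟩, rfl⟩ := exists_dvd_and_dvd_of_dvd_mul (Dvd.intro t h)
  by_cases hps : p * s = 0
  · rcases mul_eq_zero.1 hps with rfl | rfl
    · exact ⟨0, 1, t, s * q, by simp⟩
    · exact ⟨p * r, t, 1, 0, by simp⟩
  · refine ⟨p, q, r, s, rfl, mul_left_cancel₀ hps ?_, rfl, mul_comm s q⟩
    rw [h, mul_mul_mul_comm, mul_comm r q]

/-- The linear forms `p x + q y` and `r x + s y` multiply to the binary quadratic form
`a x² + b x y + c y²`, expressed by comparing coefficients. -/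
structure IsFormFactorization {R : Type*} [CommSemiring R] (a b c p q r s : R) : Prop where
  sq_left : a = p * r
  mixed : b = p * s + q * r
  sq_right : c = q * s

namespace IsFormFactorization

variable {R : Type*} [CommSemiring R] {a b c p q r s : R}

lemma swap (h : IsFormFactorization a b c p q r s) : IsFormFactorization a b c r s p q where
  sq_left := h.sq_left.trans (mul_comm p r)
  mixed := by rw [h.mixed, add_comm, mul_comm p s, mul_comm q r]
  sq_right := h.sq_right.trans (mul_comm q s)

lemma isCoprime_left (h : IsFormFactorization a b c p q r s) {x y z : R}
    (hxyz : x * a + y * b + z * c = 1) : IsCoprime p q := by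
  refine ⟨x * r + y * s, y * r + z * s, hxyz ▸ ?_⟩
  rw [h.sq_left, h.mixed, h.sq_right]
  ring

end IsFormFactorization

lemma exists_isFormFactorization_of_discrim_eq_sq {R : Type*} [CommRing R] [IsDomain R]
    [DecompositionMonoid R] (two_prime : Prime (2 : R)) {a b c d : R}
    (hd : discrim a b c = d ^ 2) :
    ∃ p q r s : R, IsFormFactorization a b c p q r s ∧ p * s - q * r = d := by
  have hdisc : b ^ 2 - 4 * a * c = d ^ 2 := hd
  have two_dvd : 2 ∣ b + d := two_prime.dvd_of_dvd_pow (n := 2)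
    ⟨b ^ 2 + b * d - 2 * a * c, by linear_combination -hdisc⟩
  obtain ⟨u, hu⟩ := two_dvd
  have hprod : u * (b - u) = a * c := by
    apply mul_left_cancel₀ (mul_ne_zero two_prime.ne_zero two_prime.ne_zero)
    linear_combination hdisc + (d - b + 2 * u) * hu
  obtain ⟨p, q, r, s, hps, hqr, ha, hc⟩ := exists_refinement_of_mul_eq_mul hprod
  exact ⟨p, q, r, s, ⟨ha, by linear_combination hps + hqr, hc⟩,
    by linear_combination hqr - hps - hu⟩

lemma exists_combination_eq_one_of_gcd_eq_one {a b c : ℤ}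
    (h : Int.gcd a (Int.gcd b c) = 1) : ∃ x y z : ℤ, x * a + y * b + z * c = 1 := by
  obtain ⟨x, w, hxw⟩ := Int.isCoprime_iff_gcd_eq_one.2 h
  refine ⟨x, w * Int.gcdA b c, w * Int.gcdB b c, ?_⟩
  rw [← hxw, Int.gcd_eq_gcd_ab b c]
  ring

lemma latticeOf_subset_intLattice (p q r s : ℤ) :
    latticeOf ((p : ℝ), (r : ℝ)) ((q : ℝ), (s : ℝ)) ⊆ intLattice := by
  rintro _ ⟨i, j, rfl⟩
  exact ⟨i * p + j * q, i * r + j * s, by simp⟩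

lemma fst_image_latticeOf (v w : ℝ × ℝ) :
    Prod.fst '' latticeOf v w = {x | ∃ i j : ℤ, x = i * v.1 + j * w.1} := by
  ext x
  constructor
  · rintro ⟨_, ⟨i, j, rfl⟩, rfl⟩
    exact ⟨i, j, rfl⟩
  · rintro ⟨i, j, rfl⟩
    exact ⟨_, ⟨i, j, rfl⟩, rfl⟩

lemma snd_image_latticeOf (v w : ℝ × ℝ) :
    Prod.snd '' latticeOf v w = {x | ∃ i j : ℤ, x = i * v.2 + j * w.2} := by
  ext x
  constructor
  · rintro ⟨_, ⟨i, j, rfl⟩, rfl⟩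
    exact ⟨i, j, rfl⟩
  · rintro ⟨i, j, rfl⟩
    exact ⟨_, ⟨i, j, rfl⟩, rfl⟩

lemma setOf_combination_eq_range_intCast {R : Type*} [Ring R] {p q : ℤ} (h : IsCoprime p q) :
    {x : R | ∃ i j : ℤ, x = i * p + j * q} = Set.range (Int.cast : ℤ → R) := by
  ext x
  constructor
  · rintro ⟨i, j, rfl⟩
    exact ⟨i * p + j * q, by push_cast; rfl⟩
  · rintro ⟨m, rfl⟩
    obtain ⟨i, j, hij⟩ := h
    have hm : m = m * i * p + m * j * q := by linear_combination -m * hij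
    exact ⟨m * i, m * j, by simpa using congrArg (Int.cast : ℤ → R) hm⟩

lemma isReducedLattice_latticeOf {p q r s : ℤ} (hpq : IsCoprime p q) (hrs : IsCoprime r s) :
    IsReducedLattice (latticeOf ((p : ℝ), (r : ℝ)) ((q : ℝ), (s : ℝ))) :=
  ⟨(fst_image_latticeOf _ _).trans (setOf_combination_eq_range_intCast hpq),
    (snd_image_latticeOf _ _).trans (setOf_combination_eq_range_intCast hrs)⟩

lemma image_intLattice (f : (ℝ × ℝ) →ᵃ[ℝ] ℝ × ℝ) :
    f '' intLattice = translateSet (f 0) (latticeOf (f.linear (1, 0)) (f.linear (0, 1))) := by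
  have hf (i j : ℤ) : f ((i : ℝ), (j : ℝ)) =
      f 0 + ((i : ℝ) • f.linear (1, 0) + (j : ℝ) • f.linear (0, 1)) := by
    rw [← map_smul, ← map_smul, ← map_add, f.decomp]
    simp [add_comm]
  ext z
  constructor
  · rintro ⟨_, ⟨i, j, rfl⟩, rfl⟩
    exact ⟨_, ⟨i, j, rfl⟩, (hf i j).symm⟩
  · rintro ⟨_, ⟨i, j, rfl⟩, rfl⟩
    exact ⟨_, ⟨i, j, rfl⟩, hf i j⟩

section LinearForms

variable {R : Type*} [CommRing R] {p q r s : R}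

/-- The affine automorphism `(x, y) ↦ (p (x - x₀) + q (y - y₀), r (x - x₀) + s (y - y₀))` of `R²`,
whose coordinate functions are two linear forms centred at `z₀ = (x₀, y₀)`. -/
def linearFormsEquiv (h : IsUnit (p * s - q * r)) (z₀ : R × R) : (R × R) ≃ᵃ[R] R × R :=
  (AffineEquiv.constVAdd R (R × R) (-z₀)).trans
    (Matrix.toLinearEquiv (Module.Basis.finTwoProd R) !![p, q; r, s]
      (by rwa [Matrix.det_fin_two_of])).toAffineEquiv

lemma linearFormsEquiv_apply (h : IsUnit (p * s - q * r)) (z₀ z : R × R) :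
    linearFormsEquiv h z₀ z =
      (p * (z.1 - z₀.1) + q * (z.2 - z₀.2), r * (z.1 - z₀.1) + s * (z.2 - z₀.2)) := by
  simp [linearFormsEquiv, Matrix.toLinearEquiv, neg_add_eq_sub]

lemma linearFormsEquiv_linear_apply (h : IsUnit (p * s - q * r)) (z₀ z : R × R) :
    (linearFormsEquiv h z₀).linear z = (p * z.1 + q * z.2, r * z.1 + s * z.2) := by
  rw [linearFormsEquiv]
  exact Matrix.toLin_finTwoProd_apply p q r s z

end LinearForms

section Hyperbola

variable {a b c : ℤ} {x₀ y₀ n : ℝ}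

lemma hypSet_neg : hypSet (-a) (-b) (-c) x₀ y₀ (-n) = hypSet a b c x₀ y₀ n := by
  ext z
  simp only [hypSet, Set.mem_ofPred_eq, Int.cast_neg]
  rw [← neg_inj]
  ring_nf

lemma image_hypSet {p q r s : ℤ} (hfac : IsFormFactorization a b c p q r s)
    (hdet : IsUnit ((p : ℝ) * s - q * r)) :
    linearFormsEquiv hdet (x₀, y₀) '' hypSet a b c x₀ y₀ n = {z | z.1 * z.2 = n} := by
  rw [← Set.image_preimage_eq {z : ℝ × ℝ | z.1 * z.2 = n}
    (linearFormsEquiv hdet (x₀, y₀)).surjective]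
  congr 1
  ext z
  simp only [hypSet, Set.mem_ofPred_eq, Set.mem_preimage, linearFormsEquiv_apply, hfac.sq_left,
    hfac.mixed, hfac.sq_right]
  push_cast
  ring_nf

end Hyperbola

/-- There is an invertible affine transformation of `ℝ²` sending the hyperbola `h` to
`{xy = |n|}` and sending `ℤ²` to `p + Λ`, where `Λ ⊆ ℤ²` is a sublattice with
`det Λ = Δ`; moreover if `gcd(a,b,c) = 1` then `Λ` is reduced. -/
theorem statement12 (a b c Δ : ℤ) (hΔ : 0 < Δ)
    (hdisc : (Δ : ℝ) = Real.sqrt ((b : ℝ) ^ 2 - 4 * (a : ℝ) * (c : ℝ)))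
    (x₀ y₀ n : ℝ) (hn : n ≠ 0) :
    ∃ (f : (ℝ × ℝ) ≃ᵃ[ℝ] ℝ × ℝ) (p v w : ℝ × ℝ),
      v.1 * w.2 - v.2 * w.1 ≠ 0 ∧
      latticeOf v w ⊆ intLattice ∧
      detOf v w = (Δ : ℝ) ∧
      (f '' hypSet a b c x₀ y₀ n) = {q : ℝ × ℝ | q.1 * q.2 = |n|} ∧
      (f '' intLattice) = translateSet p (latticeOf v w) ∧
      (Int.gcd a (Int.gcd b c) = 1 → IsReducedLattice (latticeOf v w)) := by
  wlog hn_pos : 0 < n generalizing a b c n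
  · simpa [hypSet_neg, Int.neg_gcd, Int.gcd_neg] using
      this (-a) (-b) (-c) (by simpa using hdisc) (-n) (neg_ne_zero.2 hn)
        (neg_pos.2 (hn.lt_of_le (not_lt.1 hn_pos)))
  have hΔ_pos : (0 : ℝ) < Δ := Int.cast_pos.2 hΔ
  have hdiscrim : discrim a b c = Δ ^ 2 := by
    rw [discrim, sq Δ]
    exact_mod_cast ((Real.sqrt_eq_iff_mul_self_eq_of_pos hΔ_pos).1 hdisc.symm).symm
  obtain ⟨p, q, r, s, hfac, hdet⟩ :=
    exists_isFormFactorization_of_discrim_eq_sq Int.prime_two hdiscrim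
  have hdet_real : (p : ℝ) * s - q * r = Δ := by exact_mod_cast hdet
  have hunit : IsUnit ((p : ℝ) * s - q * r) := hdet_real ▸ hΔ_pos.ne'.isUnit
  refine ⟨linearFormsEquiv hunit (x₀, y₀), linearFormsEquiv hunit (x₀, y₀) 0, (p, r), (q, s),
    ?_, latticeOf_subset_intLattice p q r s, ?_, ?_, ?_, fun hgcd => ?_⟩
  · rw [mul_comm (r : ℝ)]; exact hunit.ne_zero
  · rw [detOf, mul_comm (r : ℝ), hdet_real, abs_of_pos hΔ_pos]
  · rw [image_hypSet hfac hunit, abs_of_pos hn_pos]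
  · simpa [linearFormsEquiv_linear_apply] using
      image_intLattice (linearFormsEquiv hunit (x₀, y₀)).toAffineMap
  · obtain ⟨x, y, z, hxyz⟩ := exists_combination_eq_one_of_gcd_eq_one hgcd
    exact isReducedLattice_latticeOf (hfac.isCoprime_left hxyz) (hfac.swap.isCoprime_left hxyz)

end
end
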